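/- arXiv:2205.11351 — 2 statements merged into one kernel-verified Lean document; each statement's English description precedes it below -/
import Mathlib

section
/- Let y ∈ ℂ with Re(y) > 0. Then y Σ_{n=1}^∞ (γ + log(ny))/(e^{ny} − 1) − (1/4) y log(y) + y((1/4)log(2π) − γ/4) + (1/2)log²(y) − γ²/2 − π²/12 = Σ_{n=1}^∞ { ψ₁(2πin/y) + ψ₁(−2πin/y) − (1/2)(log²(2πin/y) + log²(−2πin/y)) + y/(4n) }, where the series on the right converges. -/
open Filter Topology MeasureTheory

noncomputable def eulerGamma : ℝ := Real.eulerMascheroniConstant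

noncomputable def gamma1 : ℝ :=
  limUnder atTop (fun n : ℕ => ∑ j ∈ Finset.Icc 1 n, Real.log j / j - (Real.log n) ^ 2 / 2)

noncomputable def psi1 (z : ℂ) : ℂ :=
  -(gamma1 : ℂ) - Complex.log z / z -
    ∑' n : ℕ, (Complex.log (((n : ℂ) + 1) + z) / (((n : ℂ) + 1) + z)
      - Complex.log ((n : ℂ) + 1) / ((n : ℂ) + 1))

noncomputable def psiTerm (y : ℂ) (n : ℕ) : ℂ :=
  psi1 (2 * (Real.pi : ℂ) * Complex.I * ((n : ℂ) + 1) / y)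
    + psi1 (-(2 * (Real.pi : ℂ) * Complex.I * ((n : ℂ) + 1) / y))
    - (1/2) * ((Complex.log (2 * (Real.pi : ℂ) * Complex.I * ((n : ℂ) + 1) / y)) ^ 2
      + (Complex.log (-(2 * (Real.pi : ℂ) * Complex.I * ((n : ℂ) + 1) / y))) ^ 2)
    + y / (4 * ((n : ℂ) + 1))

open Filter Topology MeasureTheory

noncomputable def gFn (z : ℂ) : ℂ := Complex.log z / z
noncomputable def FFn (z : ℂ) : ℂ := (3 - 2 * Complex.log z) / z ^ 3
noncomputable def qFn (s : ℝ) : ℝ := Int.fract s * (1 - Int.fract s) / 2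
noncomputable def PhiFn (z : ℂ) : ℂ := ∫ s in Set.Ioi (0:ℝ), (qFn s : ℂ) * FFn (z + s)
noncomputable def DeltaFn (z : ℂ) : ℂ :=
  ((Complex.log (z + 1)) ^ 2 - (Complex.log z) ^ 2) / 2 - (gFn z + gFn (z + 1)) / 2
noncomputable def zFn (y : ℂ) (n : ℤ) : ℂ := 2 * (Real.pi : ℂ) * Complex.I * n / y

lemma qFn_nonneg (s : ℝ) : 0 ≤ qFn s := by
  unfold qFn
  have := Int.fract_nonneg s
  have := Int.fract_lt_one s
  have : 0 ≤ Int.fract s * (1 - Int.fract s) := mul_nonneg (by linarith) (by linarith)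
  linarith

lemma qFn_le (s : ℝ) : qFn s ≤ 1 := by
  unfold qFn
  have := Int.fract_nonneg s
  have := Int.fract_lt_one s
  nlinarith

lemma qFn_norm_le (s : ℝ) : ‖(qFn s : ℂ)‖ ≤ 1 := by
  rw [Complex.norm_real, Real.norm_of_nonneg (qFn_nonneg s)]; exact qFn_le s

lemma qFn_meas : Measurable (fun s : ℝ => (qFn s : ℂ)) := by
  unfold qFn
  have := measurable_fract (R := ℝ)
  fun_prop

lemma em_one (L f f' f'' : ℝ → ℂ) (k : ℕ)
    (hL : ∀ x : ℝ, 0 ≤ x → HasDerivAt L (f x) x)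
    (hf : ∀ x : ℝ, 0 ≤ x → HasDerivAt f (f' x) x)
    (hf' : ∀ x : ℝ, 0 ≤ x → HasDerivAt f' (f'' x) x)
    (hi : IntegrableOn (fun s => (qFn s : ℂ) * f'' s) (Set.Ioi 0)) :
    ∫ s in (k:ℝ)..((k+1:ℕ):ℝ), (qFn s : ℂ) * f'' s =
      (f k + f ((k:ℝ)+1)) / 2 - (L ((k:ℝ)+1) - L k) := by
  have hle : (k:ℝ) ≤ ((k+1:ℕ):ℝ) := by push_cast; linarith
  have hk : (0:ℝ) ≤ k := Nat.cast_nonneg k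
  have key : ∀ s ∈ Set.Ico (k:ℝ) ((k+1:ℕ):ℝ), (qFn s : ℂ) * f'' s =
      (((s - k) * (1 - (s - k)) / 2 : ℝ) : ℂ) * f'' s := by
    intro s hs
    have : Int.fract s = s - k := by
      rw [Int.fract_eq_iff]
      refine ⟨by linarith [hs.1], ?_, k, by simp⟩
      have := hs.2; push_cast at this; linarith
    simp only [qFn, this]
  have hi2 : IntervalIntegrable (fun s => (qFn s : ℂ) * f'' s) volume (k:ℝ) ((k+1:ℕ):ℝ) := by
    rw [intervalIntegrable_iff_integrableOn_Ioc_of_le hle]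
    apply hi.mono_set
    intro x hx
    exact lt_of_le_of_lt hk hx.1
  have hi3 : IntervalIntegrable (fun s : ℝ => (((s - k) * (1 - (s - k)) / 2 : ℝ) : ℂ) * f'' s)
      volume (k:ℝ) ((k+1:ℕ):ℝ) := by
    rw [intervalIntegrable_iff_integrableOn_Ico_of_le hle] at hi2 ⊢
    exact hi2.congr_fun key measurableSet_Ico
  have e1 : ∫ s in (k:ℝ)..((k+1:ℕ):ℝ), (qFn s : ℂ) * f'' s =
      ∫ s in (k:ℝ)..((k+1:ℕ):ℝ), (((s - k) * (1 - (s - k)) / 2 : ℝ) : ℂ) * f'' s := by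
    rw [intervalIntegral.integral_of_le hle, intervalIntegral.integral_of_le hle,
      ← integral_Ico_eq_integral_Ioc, ← integral_Ico_eq_integral_Ioc]
    exact setIntegral_congr_fun measurableSet_Ico key
  rw [e1]
  have hd : ∀ x ∈ Set.uIcc (k:ℝ) ((k+1:ℕ):ℝ),
      HasDerivAt (fun s : ℝ => (((s - k) * (1 - (s - k)) / 2 : ℝ) : ℂ) * f' s
        - (((1 - 2 * (s - k)) / 2 : ℝ) : ℂ) * f s - L s)
      ((((x - k) * (1 - (x - k)) / 2 : ℝ) : ℂ) * f'' x) x := by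
    intro x hx
    rw [Set.uIcc_of_le hle] at hx
    have hx0 : 0 ≤ x := hk.trans hx.1
    have a1 : HasDerivAt (fun s : ℝ => ((s - k) * (1 - (s - k)) / 2 : ℝ))
        ((1 - 2 * (x - k)) / 2) x := by
      have h0 := (hasDerivAt_id x).sub_const (k:ℝ)
      have := (h0.mul (h0.const_sub 1)).div_const 2
      refine this.congr_deriv ?_
      simp; ring
    have a2 : HasDerivAt (fun s : ℝ => ((1 - 2 * (s - k)) / 2 : ℝ)) (-1) x := by
      have h0 := (hasDerivAt_id x).sub_const (k:ℝ)
      have := ((h0.const_mul 2).const_sub 1).div_const 2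
      refine this.congr_deriv ?_
      norm_num
    have := ((a1.ofReal_comp.mul (hf' x hx0)).sub (a2.ofReal_comp.mul (hf x hx0))).sub (hL x hx0)
    refine this.congr_deriv ?_
    push_cast; ring
  rw [intervalIntegral.integral_eq_sub_of_hasDerivAt hd hi3]
  push_cast
  ring

lemma em_tendsto (L f f' f'' : ℝ → ℂ)
    (hL : ∀ x : ℝ, 0 ≤ x → HasDerivAt L (f x) x)
    (hf : ∀ x : ℝ, 0 ≤ x → HasDerivAt f (f' x) x)
    (hf' : ∀ x : ℝ, 0 ≤ x → HasDerivAt f' (f'' x) x)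
    (hi : IntegrableOn (fun s => (qFn s : ℂ) * f'' s) (Set.Ioi 0)) :
    Tendsto (fun K : ℕ => ∑ k ∈ Finset.range K, ((f k + f ((k:ℝ)+1)) / 2 - (L ((k:ℝ)+1) - L k)))
      atTop (𝓝 (∫ s in Set.Ioi (0:ℝ), (qFn s : ℂ) * f'' s)) := by
  have h := intervalIntegral_tendsto_integral_Ioi 0 hi (tendsto_natCast_atTop_atTop (R := ℝ))
  refine h.congr fun K => ?_
  have := intervalIntegral.sum_integral_adjacent_intervals (μ := volume)
    (f := fun s => (qFn s : ℂ) * f'' s) (a := fun k : ℕ => (k:ℝ)) (n := K) ?_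
  · simp only [Nat.cast_zero] at this
    rw [← this]
    exact Finset.sum_congr rfl fun k _ => em_one L f f' f'' k hL hf hf' hi
  · intro k _
    have hle : (k:ℝ) ≤ ((k+1:ℕ):ℝ) := by push_cast; linarith
    rw [intervalIntegrable_iff_integrableOn_Ioc_of_le hle]
    apply hi.mono_set
    intro x hx
    exact lt_of_le_of_lt (Nat.cast_nonneg k) hx.1

lemma hasDerivAt_gFn {z : ℂ} (hz : z ∈ Complex.slitPlane) :
    HasDerivAt gFn ((1 - Complex.log z) / z ^ 2) z := by
  have h0 := Complex.slitPlane_ne_zero hz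
  have := (Complex.hasDerivAt_log hz).div (hasDerivAt_id z) h0
  refine this.congr_deriv ?_
  simp only [id]
  field_simp

lemma hasDerivAt_gFn' {z : ℂ} (hz : z ∈ Complex.slitPlane) :
    HasDerivAt (fun z => (1 - Complex.log z) / z ^ 2) (-FFn z) z := by
  have h0 := Complex.slitPlane_ne_zero hz
  have := ((Complex.hasDerivAt_log hz).const_sub 1).div (hasDerivAt_pow 2 z) (pow_ne_zero 2 h0)
  refine this.congr_deriv ?_
  unfold FFn
  field_simp
  push_cast
  ring

lemma hasDerivAt_logsq {z : ℂ} (hz : z ∈ Complex.slitPlane) :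
    HasDerivAt (fun z => (Complex.log z) ^ 2 / 2) (gFn z) z := by
  have h0 := Complex.slitPlane_ne_zero hz
  have := ((Complex.hasDerivAt_log hz).pow 2).div_const 2
  refine this.congr_deriv ?_
  unfold gFn
  field_simp
  push_cast
  ring

lemma Phi_tendsto (z : ℂ) (hz : ∀ x : ℝ, 0 ≤ x → z + x ∈ Complex.slitPlane)
    (hi : IntegrableOn (fun s : ℝ => (qFn s : ℂ) * FFn (z + s)) (Set.Ioi 0)) :
    Tendsto (fun K : ℕ => ∑ k ∈ Finset.range K, DeltaFn (z + k)) atTop (𝓝 (PhiFn z)) := by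
  have hadd : ∀ x : ℝ, HasDerivAt (fun s : ℂ => z + s) 1 (x:ℂ) := fun x =>
    (hasDerivAt_id (x:ℂ)).const_add z
  have h := em_tendsto (fun s => -((Complex.log (z + s)) ^ 2 / 2)) (fun s => - gFn (z + s))
    (fun s => -((1 - Complex.log (z + s)) / (z + s) ^ 2)) (fun s => FFn (z + s)) ?_ ?_ ?_ hi
  · refine h.congr fun K => Finset.sum_congr rfl fun k _ => ?_
    unfold DeltaFn
    push_cast
    rw [← add_assoc]
    ring
  · intro x hx
    have := ((hasDerivAt_logsq (hz x hx)).comp (x:ℂ) (hadd x)).neg.comp_ofReal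
    simpa using this
  · intro x hx
    have := ((hasDerivAt_gFn (hz x hx)).comp (x:ℂ) (hadd x)).neg.comp_ofReal
    simpa using this
  · intro x hx
    have := ((hasDerivAt_gFn' (hz x hx)).comp (x:ℂ) (hadd x)).neg.comp_ofReal
    simpa using this

lemma sum_Delta (z : ℂ) (K : ℕ) : ∑ k ∈ Finset.range K, DeltaFn (z + k) =
    ((Complex.log (z + K)) ^ 2 - (Complex.log z) ^ 2) / 2
      - ∑ k ∈ Finset.range (K+1), gFn (z + k) + (gFn z + gFn (z + K)) / 2 := by
  induction K with
  | zero => simp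
  | succ n ih =>
    rw [Finset.sum_range_succ, ih, Finset.sum_range_succ _ (n+1)]
    unfold DeltaFn
    push_cast
    rw [← add_assoc]
    ring


open Filter Topology MeasureTheory

lemma log_bound (c : ℝ) (hc : 0 < c) : ∃ A : ℝ, 0 < A ∧ ∀ z : ℂ, c ≤ ‖z‖ →
    3 + 2 * ‖Complex.log z‖ ≤ A * ‖z‖ ^ (1/2 : ℝ) := by
  refine ⟨(3 + 2 * (|Real.log c| + Real.pi)) * c ^ (-(1/2) : ℝ) + 4, by positivity, ?_⟩
  intro z hz
  have hz0 : 0 < ‖z‖ := hc.trans_le hz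
  have h1 : ‖Complex.log z‖ ≤ |Real.log ‖z‖| + Real.pi := by
    refine (Complex.norm_le_abs_re_add_abs_im _).trans ?_
    rw [Complex.log_re, Complex.log_im]
    gcongr
    exact Complex.abs_arg_le_pi z
  have h2 : |Real.log ‖z‖| ≤ 2 * ‖z‖ ^ (1/2 : ℝ) + |Real.log c| := by
    have h3 := Real.log_le_rpow_div hz0.le (show (0:ℝ) < 1/2 by norm_num)
    have h4 := Real.log_le_log hc hz
    have h5 : 0 ≤ ‖z‖ ^ (1/2 : ℝ) := by positivity
    rw [abs_le]
    constructor
    · have := neg_abs_le (Real.log c); linarith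
    · have := abs_nonneg (Real.log c); linarith
  have h6 : 1 ≤ c ^ (-(1/2) : ℝ) * ‖z‖ ^ (1/2 : ℝ) := by
    rw [Real.rpow_neg hc.le, inv_mul_eq_div, one_le_div (by positivity)]
    gcongr
  have h7 : (3 + 2 * (|Real.log c| + Real.pi)) * 1 ≤
    (3 + 2 * (|Real.log c| + Real.pi)) * (c ^ (-(1/2) : ℝ) * ‖z‖ ^ (1/2 : ℝ)) := by
    gcongr
  nlinarith

lemma F_bound (c : ℝ) (hc : 0 < c) : ∃ A : ℝ, 0 < A ∧ ∀ z : ℂ, c ≤ ‖z‖ →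
    ‖FFn z‖ ≤ A * ‖z‖ ^ (-(5/2) : ℝ) := by
  obtain ⟨A, hA, h⟩ := log_bound c hc
  refine ⟨A, hA, fun z hz => ?_⟩
  have hz0 : 0 < ‖z‖ := hc.trans_le hz
  have e : ‖z‖ ^ (-(5/2) : ℝ) = ‖z‖ ^ (1/2 : ℝ) / ‖z‖ ^ 3 := by
    rw [← Real.rpow_natCast, ← Real.rpow_sub hz0]; norm_num
  unfold FFn
  rw [norm_div, norm_pow, e, ← mul_div_assoc]
  gcongr
  refine le_trans ?_ (h z hz)
  refine (norm_sub_le _ _).trans ?_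
  simp

lemma g'_bound (c : ℝ) (hc : 0 < c) : ∃ A : ℝ, 0 < A ∧ ∀ z : ℂ, c ≤ ‖z‖ →
    ‖(1 - Complex.log z) / z ^ 2‖ ≤ A * ‖z‖ ^ (-(3/2) : ℝ) := by
  obtain ⟨A, hA, h⟩ := log_bound c hc
  refine ⟨A, hA, fun z hz => ?_⟩
  have hz0 : 0 < ‖z‖ := hc.trans_le hz
  have e : ‖z‖ ^ (-(3/2) : ℝ) = ‖z‖ ^ (1/2 : ℝ) / ‖z‖ ^ 2 := by
    rw [← Real.rpow_natCast, ← Real.rpow_sub hz0]; norm_num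
  rw [norm_div, norm_pow, e, ← mul_div_assoc]
  gcongr
  refine le_trans ?_ (h z hz)
  refine (norm_sub_le _ _).trans ?_
  have := norm_nonneg (Complex.log z)
  simp
  linarith

lemma y_ne {y : ℂ} (hy : 0 < y.re) : y ≠ 0 := by
  rintro rfl; simp at hy

lemma z_eq {y : ℂ} (hy : 0 < y.re) (x : ℝ) (n : ℤ) :
    (x : ℂ) + zFn y n = (x * y + 2 * Real.pi * n * Complex.I) / y := by
  have := y_ne hy
  unfold zFn
  field_simp

lemma sector {y : ℂ} (hy : 0 < y.re) : ∃ c : ℝ, 0 < c ∧ ∀ (n : ℤ) (x : ℝ), 0 ≤ x →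
    c * (x + |(n:ℝ)|) ≤ ‖(x : ℂ) + zFn y n‖ := by
  have hy0 := y_ne hy
  have hyn : 0 < ‖y‖ := norm_pos_iff.mpr hy0
  refine ⟨1 / (‖y‖ * (1 / y.re + 1 + |y.im| / y.re)), by positivity, fun n x hx => ?_⟩
  rw [z_eq hy, norm_div]
  set M := ‖(x * y + 2 * Real.pi * n * Complex.I : ℂ)‖ with hM
  have h1 : x * y.re ≤ M := by
    have := Complex.abs_re_le_norm (x * y + 2 * Real.pi * n * Complex.I : ℂ)
    simp at this
    rw [abs_of_pos hy, abs_of_nonneg hx] at this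
    exact this
  have h2 : |x * y.im + 2 * Real.pi * n| ≤ M := by
    have := Complex.abs_im_le_norm (x * y + 2 * Real.pi * n * Complex.I : ℂ)
    simp at this
    exact this
  have h3 : 2 * Real.pi * |(n:ℝ)| ≤ M + |y.im| * x := by
    have e : 2 * Real.pi * |(n:ℝ)| = |(x * y.im + 2 * Real.pi * n) - x * y.im| := by
      rw [add_sub_cancel_left, abs_mul, abs_of_pos (show 0 < 2 * Real.pi by positivity)]
    rw [e]
    refine (abs_sub _ _).trans ?_
    rw [abs_mul x, abs_of_nonneg hx]
    linarith
  have h4 : |(n:ℝ)| ≤ 2 * Real.pi * |(n:ℝ)| := by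
    have := Real.pi_gt_three
    have := abs_nonneg (n:ℝ)
    nlinarith
  have h5 : x ≤ M / y.re := by rw [le_div_iff₀ hy]; exact h1
  have h6 : |y.im| * x ≤ |y.im| * (M / y.re) := by gcongr
  rw [div_mul_eq_mul_div, one_mul, div_le_div_iff₀ (by positivity) hyn]
  have h7 : x + |(n:ℝ)| ≤ M * (1 / y.re + 1 + |y.im| / y.re) := by
    have : M * (1 / y.re + 1 + |y.im| / y.re) = M / y.re + M + |y.im| * (M / y.re) := by
      field_simp
    linarith
  nlinarith

lemma z_slit {y : ℂ} (hy : 0 < y.re) (x : ℝ) (n : ℤ) (hx : 0 ≤ x) (h : 0 < x + |(n:ℝ)|) :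
    (x : ℂ) + zFn y n ∈ Complex.slitPlane := by
  by_cases hn : n = 0
  · subst hn
    simp at h
    left
    simpa [zFn] using h
  · right
    have : (zFn y n).im = 2 * Real.pi * n * y.re / Complex.normSq y := by
      unfold zFn
      simp [Complex.div_im]
    rw [Complex.add_im, this]
    have hy0 : Complex.normSq y ≠ 0 := by simpa using y_ne hy
    have : (n:ℝ) ≠ 0 := by exact_mod_cast hn
    have := Real.pi_ne_zero
    have := hy.ne'
    simp
    exact ⟨⟨hn, this⟩, y_ne hy⟩

lemma FB {y : ℂ} (hy : 0 < y.re) (a : ℝ) (ha : 0 < a) : ∃ C : ℝ, 0 < C ∧ ∀ (n : ℤ) (x : ℝ), 0 ≤ x →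
    a ≤ x + |(n:ℝ)| → ‖FFn (x + zFn y n)‖ ≤
      C * ((x + 1) ^ (-(5/4) : ℝ) * (1 + |(n:ℝ)|) ^ (-(5/4) : ℝ)) := by
  obtain ⟨c, hc, hs⟩ := sector hy
  obtain ⟨A, hA, hF⟩ := F_bound (c * a) (by positivity)
  refine ⟨A * (c / (1 + 1/a)) ^ (-(5/2) : ℝ), by positivity, fun n x hx h => ?_⟩
  have hn := abs_nonneg (n:ℝ)
  have h1 := hs n x hx
  have h2 : c * a ≤ ‖(x : ℂ) + zFn y n‖ := le_trans (by gcongr) h1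
  refine (hF _ h2).trans ?_
  rw [mul_assoc]
  refine mul_le_mul_of_nonneg_left ?_ hA.le
  have h3 : 1 + x + |(n:ℝ)| ≤ (1 + 1/a) * (x + |(n:ℝ)|) := by
    have : 1 ≤ 1 / a * (x + |(n:ℝ)|) := by
      rw [div_mul_eq_mul_div, one_mul, one_le_div ha]; exact h
    linarith
  have h4 : c / (1 + 1/a) * (1 + x + |(n:ℝ)|) ≤ ‖(x : ℂ) + zFn y n‖ := by
    refine le_trans ?_ h1
    rw [div_mul_eq_mul_div, div_le_iff₀ (by positivity)]
    nlinarith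
  calc ‖(x : ℂ) + zFn y n‖ ^ (-(5/2) : ℝ) ≤ (c / (1 + 1/a) * (1 + x + |(n:ℝ)|)) ^ (-(5/2) : ℝ) :=
        Real.rpow_le_rpow_of_nonpos (by positivity) h4 (by norm_num)
    _ = (c / (1 + 1/a)) ^ (-(5/2) : ℝ) * ((1 + x + |(n:ℝ)|) ^ (-(5/2) : ℝ)) := by
        rw [Real.mul_rpow (by positivity) (by positivity)]
    _ ≤ _ := by
        gcongr
        rw [← Real.mul_rpow (by positivity) (by positivity)]
        have e : (1 + x + |(n:ℝ)|) ^ (-(5/2) : ℝ) = ((1 + x + |(n:ℝ)|) ^ (2:ℝ)) ^ (-(5/4) : ℝ) := by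
          rw [← Real.rpow_mul (by positivity)]; norm_num
        rw [e]
        refine Real.rpow_le_rpow_of_nonpos (by positivity) ?_ (by norm_num)
        rw [Real.rpow_two]
        nlinarith [mul_nonneg hx hn]

lemma int_bound : IntegrableOn (fun x : ℝ => (x + 1) ^ (-(5/4) : ℝ)) (Set.Ioi 0) :=
  integrableOn_add_rpow_Ioi_of_lt (by norm_num) (by norm_num)

lemma sum_bound : Summable (fun n : ℤ => (1 + |(n:ℝ)|) ^ (-(5/4) : ℝ)) := by
  have h : Summable (fun n : ℕ => (1 + (n:ℝ)) ^ (-(5/4) : ℝ)) := by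
    have := (summable_nat_add_iff 1).mpr (Real.summable_nat_rpow.mpr (show (-(5/4):ℝ) < -1 by norm_num))
    refine this.congr fun n => ?_
    push_cast; rw [add_comm]
  apply Summable.of_nat_of_neg <;> simpa using h

lemma F_meas (z : ℂ) : Measurable (fun s : ℝ => (qFn s : ℂ) * FFn (z + s)) := by
  have := qFn_meas
  have h2 := Complex.measurable_log
  unfold FFn
  fun_prop

/-- main pointwise bound for shifted integrand -/
lemma FB' {y : ℂ} (hy : 0 < y.re) (a : ℝ) (ha : 0 < a) : ∃ C : ℝ, 0 < C ∧ ∀ (n : ℤ) (x s : ℝ), 0 ≤ x →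
    0 ≤ s → a ≤ x + |(n:ℝ)| → ‖(qFn s : ℂ) * FFn (x + zFn y n + s)‖ ≤
      C * ((s + 1) ^ (-(5/4) : ℝ) * (1 + |(n:ℝ)|) ^ (-(5/4) : ℝ)) := by
  obtain ⟨C, hC, h⟩ := FB hy a ha
  refine ⟨C, hC, fun n x s hx hs hxn => ?_⟩
  have h1 := h n (x + s) (by positivity) (by linarith)
  rw [norm_mul]
  have e : (x : ℂ) + zFn y n + s = ((x + s : ℝ) : ℂ) + zFn y n := by push_cast; ring
  rw [e]
  have h2 : ((x + s) + 1) ^ (-(5/4) : ℝ) ≤ (s + 1) ^ (-(5/4) : ℝ) :=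
    Real.rpow_le_rpow_of_nonpos (by positivity) (by linarith) (by norm_num)
  calc _ ≤ 1 * (C * (((x + s) + 1) ^ (-(5/4) : ℝ) * (1 + |(n:ℝ)|) ^ (-(5/4) : ℝ))) := by
        gcongr
        exact qFn_norm_le s
    _ ≤ _ := by rw [one_mul]; gcongr

lemma Phi_int {y : ℂ} (hy : 0 < y.re) (n : ℤ) (x : ℝ) (hx : 0 ≤ x) (h : 0 < x + |(n:ℝ)|) :
    IntegrableOn (fun s : ℝ => (qFn s : ℂ) * FFn (x + zFn y n + s)) (Set.Ioi 0) := by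
  obtain ⟨C, hC, hb⟩ := FB' hy _ h
  refine Integrable.mono' ((int_bound.mul_const ((1 + |(n:ℝ)|) ^ (-(5/4) : ℝ))).const_mul C)
    (F_meas _).aestronglyMeasurable ?_
  refine (ae_restrict_iff' measurableSet_Ioi).mpr (Eventually.of_forall fun s hs => ?_)
  exact hb n x s hx (le_of_lt hs) le_rfl

lemma Phi_tend {y : ℂ} (hy : 0 < y.re) (n : ℤ) (x : ℝ) (hx : 0 ≤ x) (h : 0 < x + |(n:ℝ)|) :
    Tendsto (fun K : ℕ => ∑ k ∈ Finset.range K, DeltaFn ((x + zFn y n) + k)) atTop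
      (𝓝 (PhiFn (x + zFn y n))) := by
  refine Phi_tendsto _ (fun s hs => ?_) (Phi_int hy n x hx h)
  have := z_slit hy (x + s) n (by positivity) (by linarith)
  convert this using 1
  push_cast; ring

lemma Phi_bound {y : ℂ} (hy : 0 < y.re) (a : ℝ) (ha : 0 < a) : ∃ C : ℝ, 0 < C ∧ ∀ (n : ℤ) (x : ℝ), 0 ≤ x →
    a ≤ x + |(n:ℝ)| → (∫ s in Set.Ioi (0:ℝ), ‖(qFn s : ℂ) * FFn (x + zFn y n + s)‖) ≤
      C * (1 + |(n:ℝ)|) ^ (-(5/4) : ℝ) := by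
  obtain ⟨C, hC, hb⟩ := FB' hy a ha
  have hI : 0 ≤ ∫ s in Set.Ioi (0:ℝ), (s + 1) ^ (-(5/4) : ℝ) :=
    setIntegral_nonneg measurableSet_Ioi fun s hs => by
      have : (0:ℝ) < s := hs
      positivity
  refine ⟨C * ((∫ s in Set.Ioi (0:ℝ), (s + 1) ^ (-(5/4) : ℝ)) + 1), by positivity, fun n x hx h => ?_⟩
  calc _ ≤ ∫ s in Set.Ioi (0:ℝ), C * ((s + 1) ^ (-(5/4) : ℝ) * (1 + |(n:ℝ)|) ^ (-(5/4) : ℝ)) := by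
        refine setIntegral_mono_on (Phi_int hy n x hx (ha.trans_le h)).norm
          ((int_bound.mul_const ((1 + |(n:ℝ)|) ^ (-(5/4) : ℝ))).const_mul C) measurableSet_Ioi ?_
        intro s hs
        exact hb n x s hx (le_of_lt hs) h
    _ = C * ((∫ s in Set.Ioi (0:ℝ), (s + 1) ^ (-(5/4) : ℝ)) * (1 + |(n:ℝ)|) ^ (-(5/4) : ℝ)) := by
        rw [integral_const_mul, integral_mul_const]
    _ ≤ _ := by
        rw [mul_assoc]
        gcongr
        linarith

lemma Phi_cont {y : ℂ} (hy : 0 < y.re) (n : ℤ) (x : ℝ) (hx : 0 ≤ x) (h : 0 < x + |(n:ℝ)|) :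
    Tendsto (fun ε : ℝ => PhiFn (((x + ε : ℝ) : ℂ) + zFn y n)) (𝓝[>] 0) (𝓝 (PhiFn (x + zFn y n))) := by
  obtain ⟨C, hC, hb⟩ := FB' hy _ h
  unfold PhiFn
  refine tendsto_integral_filter_of_dominated_convergence
    (fun s => C * ((s + 1) ^ (-(5/4) : ℝ) * (1 + |(n:ℝ)|) ^ (-(5/4) : ℝ))) ?_ ?_ ?_ ?_
  · exact Eventually.of_forall fun ε => (F_meas _).aestronglyMeasurable
  · filter_upwards [self_mem_nhdsWithin] with ε hε
    have hε : 0 < ε := hε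
    refine (ae_restrict_iff' measurableSet_Ioi).mpr (Eventually.of_forall fun s hs => ?_)
    exact hb n (x + ε) s (by positivity) (le_of_lt hs) (by linarith)
  · exact (int_bound.mul_const ((1 + |(n:ℝ)|) ^ (-(5/4) : ℝ))).const_mul C
  · refine (ae_restrict_iff' measurableSet_Ioi).mpr (Eventually.of_forall fun s hs => ?_)
    have hs : 0 < s := hs
    refine Tendsto.const_mul _ ?_
    have hsl : (x : ℂ) + zFn y n + s ∈ Complex.slitPlane := by
      have := z_slit hy (x + s) n (by positivity) (by linarith)
      convert this using 1
      push_cast; ring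
    have h0 := Complex.slitPlane_ne_zero hsl
    have hc : ContinuousAt FFn ((x : ℂ) + zFn y n + s) := by
      unfold FFn
      exact ContinuousAt.div (continuousAt_const.sub (continuousAt_const.mul (continuousAt_clog hsl)))
        (continuousAt_id.pow 3) (pow_ne_zero 3 h0)
    have h2 : Tendsto (fun ε : ℝ => ((x + ε : ℝ) : ℂ) + zFn y n + s) (𝓝[>] 0)
        (𝓝 ((x : ℂ) + zFn y n + s)) := by
      have : Continuous (fun ε : ℝ => ((x + ε : ℝ) : ℂ) + zFn y n + s) := by fun_prop
      have h3 := this.tendsto 0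
      simp only [add_zero] at h3
      exact h3.mono_left nhdsWithin_le_nhds
    exact hc.tendsto.comp h2

open Filter Topology MeasureTheory

lemma mvt_aux (H H' : ℂ → ℂ) (p A : ℝ) (hp : 0 ≤ p) (hA : 0 < A)
    (hd : ∀ z ∈ Complex.slitPlane, HasDerivAt H (H' z) z)
    (hb : ∀ z : ℂ, 1 ≤ ‖z‖ → ‖H' z‖ ≤ A * ‖z‖ ^ (-p)) (z : ℂ) (K : ℝ) (hK : 2 * ‖z‖ + 2 ≤ K) :
    ‖H (K + z) - H K‖ ≤ A * (K / 2) ^ (-p) * ‖z‖ := by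
  have hz := norm_nonneg z
  have hs : ∀ w ∈ Metric.closedBall (K : ℂ) ‖z‖, K / 2 ≤ w.re := by
    intro w hw
    rw [Metric.mem_closedBall, dist_eq_norm] at hw
    have := (Complex.abs_re_le_norm _).trans hw
    rw [abs_le] at this
    simp at this
    linarith [this.1]
  have := Convex.norm_image_sub_le_of_norm_hasDerivWithin_le (f := H) (f' := H')
    (s := Metric.closedBall (K : ℂ) ‖z‖) (x := (K:ℂ)) (y := K + z) (C := A * (K / 2) ^ (-p)) ?_ ?_
    (convex_closedBall _ _) (by simp) (by simp [dist_eq_norm])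
  · simpa using this
  · intro w hw
    have := hs w hw
    exact (hd w (Or.inl (by linarith))).hasDerivWithinAt
  · intro w hw
    have h1 := hs w hw
    have h2 : K / 2 ≤ ‖w‖ := h1.trans (Complex.re_le_norm w)
    refine (hb w (by linarith)).trans ?_
    gcongr A * ?_
    exact Real.rpow_le_rpow_of_nonpos (by linarith) h2 (by linarith)

lemma g_bound : ∃ A : ℝ, 0 < A ∧ ∀ z : ℂ, 1 ≤ ‖z‖ → ‖gFn z‖ ≤ A * ‖z‖ ^ (-(1/2) : ℝ) := by
  obtain ⟨A, hA, h⟩ := log_bound 1 one_pos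
  refine ⟨A, hA, fun z hz => ?_⟩
  have hz0 : 0 < ‖z‖ := one_pos.trans_le hz
  have e : ‖z‖ ^ (-(1/2) : ℝ) = ‖z‖ ^ (1/2 : ℝ) / ‖z‖ := by
    nth_rw 3 [← Real.rpow_one ‖z‖]; rw [← Real.rpow_sub hz0]; norm_num
  unfold gFn
  rw [norm_div, e, ← mul_div_assoc]
  gcongr
  refine le_trans ?_ (h z hz)
  have := norm_nonneg (Complex.log z)
  linarith

lemma half_rpow_tendsto (p : ℝ) (hp : 0 < p) :
    Tendsto (fun K : ℕ => ((K:ℝ) / 2) ^ (-p)) atTop (𝓝 0) :=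
  (tendsto_rpow_neg_atTop hp).comp
    (tendsto_natCast_atTop_atTop.atTop_div_const (by norm_num))

lemma logsq_tendsto (z : ℂ) : Tendsto (fun K : ℕ => (Complex.log (K + z)) ^ 2 / 2
    - (Complex.log K) ^ 2 / 2) atTop (𝓝 0) := by
  obtain ⟨A, hA, h⟩ := g_bound
  have h1 : Tendsto (fun K : ℕ => A * ((K:ℝ) / 2) ^ (-(1/2) : ℝ) * ‖z‖) atTop (𝓝 0) := by
    simpa using ((half_rpow_tendsto (1/2) (by norm_num)).const_mul A).mul_const ‖z‖
  refine squeeze_zero_norm' ?_ h1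
  filter_upwards [tendsto_natCast_atTop_atTop.eventually_ge_atTop (2 * ‖z‖ + 2)] with K hK
  exact mvt_aux (fun z => (Complex.log z) ^ 2 / 2) gFn (1/2) A (by norm_num) hA
    (fun z hz => hasDerivAt_logsq hz) h z K hK

lemma g_tendsto (z : ℂ) : Tendsto (fun K : ℕ => gFn (K + z)) atTop (𝓝 0) := by
  obtain ⟨A, hA, h⟩ := g_bound
  have h1 : Tendsto (fun K : ℕ => A * ((K:ℝ) / 2) ^ (-(1/2) : ℝ)) atTop (𝓝 0) := by
    simpa using ((half_rpow_tendsto (1/2) (by norm_num)).const_mul A)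
  refine squeeze_zero_norm' ?_ h1
  filter_upwards [tendsto_natCast_atTop_atTop.eventually_ge_atTop (2 * ‖z‖ + 2)] with K hK
  have hz := norm_nonneg z
  have h2 : (K:ℝ) / 2 ≤ ‖(K:ℂ) + z‖ := by
    have := norm_sub_le ((K:ℂ) + z) z
    rw [add_sub_cancel_right, Complex.norm_natCast] at this
    linarith
  refine (h _ (by linarith)).trans ?_
  gcongr A * ?_
  exact Real.rpow_le_rpow_of_nonpos (by linarith) h2 (by norm_num)

lemma g_diff_summable (z : ℂ) : Summable (fun n : ℕ => gFn (((n : ℂ) + 1) + z) - gFn ((n : ℂ) + 1)) := by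
  obtain ⟨A, hA, h⟩ := g'_bound 1 one_pos
  have key : Summable (fun n : ℕ => gFn ((n : ℂ) + z) - gFn (n : ℂ)) := by
    have h1 : Summable (fun K : ℕ => A * ((K:ℝ) / 2) ^ (-(3/2) : ℝ) * ‖z‖) := by
      refine Summable.mul_right _ (Summable.mul_left _ ?_)
      have := (Real.summable_nat_rpow.mpr (show (-(3/2):ℝ) < -1 by norm_num)).div_const ((2:ℝ) ^ (-(3/2):ℝ))
      refine this.congr fun n => ?_
      rw [Real.div_rpow (by positivity) (by positivity)]
    refine Summable.of_norm_bounded_eventually h1 ?_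
    rw [Nat.cofinite_eq_atTop]
    filter_upwards [tendsto_natCast_atTop_atTop.eventually_ge_atTop (2 * ‖z‖ + 2)] with K hK
    exact mvt_aux gFn _ (3/2) A (by norm_num) hA
      (fun z hz => hasDerivAt_gFn hz) h z K hK
  have := (summable_nat_add_iff 1).mpr key
  refine this.congr fun n => ?_
  push_cast; rfl

lemma gamma1_aux : Tendsto (fun K : ℕ => ((∑ j ∈ Finset.Icc 1 (K+1), Real.log j / j
    - (Real.log (K+1:ℕ)) ^ 2 / 2 : ℝ) : ℂ)) atTop (𝓝 (-PhiFn 1)) := by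
  have h1 := Phi_tend (y := 1) (by simp) 0 1 (by norm_num) (by norm_num)
  have e1 : ((1:ℝ):ℂ) + zFn 1 0 = 1 := by simp [zFn]
  rw [e1] at h1
  have h2 := (h1.sub ((g_tendsto 1).div_const 2)).neg
  simp only [zero_div, sub_zero] at h2
  refine h2.congr fun K => ?_
  rw [sum_Delta]
  have e2 : ∀ k : ℕ, gFn (1 + k) = ((Real.log (k+1:ℕ) / (k+1:ℕ) : ℝ) : ℂ) := by
    intro k
    unfold gFn
    push_cast
    rw [Complex.ofReal_log (by positivity)]
    push_cast
    rw [add_comm]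
  have e3 : gFn 1 = 0 := by simp [gFn]
  have e4 : Complex.log (1 + K) = ((Real.log (K+1:ℕ) : ℝ) : ℂ) := by
    rw [Complex.ofReal_log (by positivity)]
    push_cast
    rw [add_comm]
  have e5 : ∑ j ∈ Finset.Icc 1 (K+1), Real.log j / j = ∑ k ∈ Finset.range (K+1), Real.log (k+1:ℕ) / (k+1:ℕ) := by
    rw [Finset.range_eq_Ico, Finset.sum_Ico_add' (fun j : ℕ => Real.log j / j) 0 (K+1) 1]
    rfl
  rw [add_comm (K:ℂ) 1, e3, e4, e5]
  simp only [e2, Complex.log_one]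
  push_cast
  ring

lemma gamma1_tendsto : Tendsto (fun n : ℕ => ∑ j ∈ Finset.Icc 1 n, Real.log j / j - (Real.log n) ^ 2 / 2)
    atTop (𝓝 gamma1) := by
  have h1 := (Complex.continuous_re.tendsto _).comp gamma1_aux
  have h2 : Tendsto (fun n : ℕ => ∑ j ∈ Finset.Icc 1 n, Real.log j / j - (Real.log n) ^ 2 / 2)
    atTop (𝓝 ((-PhiFn 1).re)) := by
    rw [← tendsto_add_atTop_iff_nat 1]
    refine h1.congr fun K => ?_
    simp only [Function.comp, Complex.ofReal_re]
  have : gamma1 = (-PhiFn 1).re := h2.limUnder_eq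
  rw [this]; exact h2

lemma Phi_one : PhiFn 1 = -(gamma1 : ℂ) := by
  have h1 := (Complex.continuous_ofReal.tendsto _).comp ((tendsto_add_atTop_iff_nat 1).mpr gamma1_tendsto)
  have := tendsto_nhds_unique gamma1_aux h1
  rw [← this, neg_neg]

lemma psi1_eq {y : ℂ} (hy : 0 < y.re) (n : ℤ) (hn : n ≠ 0) :
    PhiFn (zFn y n) = psi1 (zFn y n) - (Complex.log (zFn y n)) ^ 2 / 2 + gFn (zFn y n) / 2 := by
  have hn' : (0:ℝ) < 0 + |(n:ℝ)| := by
    rw [zero_add, abs_pos]; exact_mod_cast hn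
  have h1 := Phi_tend hy n 0 le_rfl hn'
  rw [Complex.ofReal_zero, zero_add] at h1
  set z := zFn y n
  have hsum := (g_diff_summable z).hasSum.tendsto_sum_nat
  have hpsi : psi1 z = -(gamma1 : ℂ) - gFn z - ∑' n : ℕ, (gFn (((n : ℂ) + 1) + z) - gFn ((n : ℂ) + 1)) := rfl
  have hg := (Complex.continuous_ofReal.tendsto _).comp gamma1_tendsto
  have h2 := (((logsq_tendsto z).sub hg).sub hsum).add ((g_tendsto z).div_const 2)
  have h3 := h2.add_const (-(Complex.log z) ^ 2 / 2 - gFn z / 2)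
  refine tendsto_nhds_unique h1 ?_
  rw [hpsi]
  have e : 0 - (gamma1:ℂ) - ∑' n : ℕ, (gFn (((n : ℂ) + 1) + z) - gFn ((n : ℂ) + 1)) + 0 / 2
      + (-(Complex.log z) ^ 2 / 2 - gFn z / 2) = -(gamma1 : ℂ) - gFn z - ∑' n : ℕ, (gFn (((n : ℂ) + 1) + z) - gFn ((n : ℂ) + 1)) - (Complex.log z) ^ 2 / 2 + gFn z / 2 := by ring
  rw [← e]
  refine h3.congr fun K => ?_
  rw [sum_Delta, Finset.sum_range_succ', Finset.sum_sub_distrib]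
  have e5 : ∑ j ∈ Finset.Icc 1 K, Real.log j / j = ∑ k ∈ Finset.range K, Real.log (k+1:ℕ) / (k+1:ℕ) := by
    rw [Finset.range_eq_Ico, Finset.sum_Ico_add' (fun j : ℕ => Real.log j / j) 0 K 1]
    rfl
  have e6 : ∑ k ∈ Finset.range K, gFn ((k:ℂ) + 1) = ((∑ j ∈ Finset.Icc 1 K, Real.log j / j : ℝ) : ℂ) := by
    rw [e5]
    push_cast
    refine Finset.sum_congr rfl fun k _ => ?_
    unfold gFn
    rw [Complex.ofReal_log (by positivity)]
    push_cast
    rfl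
  have e7 : ∑ k ∈ Finset.range K, gFn (z + (k+1:ℕ)) = ∑ k ∈ Finset.range K, gFn ((k:ℂ) + 1 + z) := by
    refine Finset.sum_congr rfl fun k _ => ?_
    push_cast
    rw [add_comm]
  have e8 : Complex.log (K:ℂ) = ((Real.log K : ℝ) : ℂ) := by
    rw [Complex.ofReal_log (by positivity)]; simp
  rw [e6, e7, e8, add_comm z K]
  simp only [Function.comp]
  push_cast
  rw [add_zero]
  ring

open Filter Topology MeasureTheory

lemma pow_exp_int (k : ℕ) (c : ℝ) (hc : 0 < c) :
    IntegrableOn (fun x : ℝ => x ^ k * Real.exp (-c * x)) (Set.Ioi 0) := by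
  have h := integrableOn_rpow_mul_exp_neg_mul_rpow (p := 1) (s := k) (b := c)
    (by have : (0:ℝ) ≤ k := Nat.cast_nonneg k
        linarith) one_pos hc
  refine h.congr_fun (fun x _ => ?_) measurableSet_Ioi
  simp

lemma norm_exp_mul (p : ℂ) (x : ℝ) : ‖Complex.exp (-(p * x))‖ = Real.exp (-(p.re * x)) := by
  rw [Complex.norm_exp]; simp

lemma lap_int (h : ℝ → ℂ) (hm : Measurable h) (hb : ∀ x : ℝ, 0 < x → ‖h x‖ ≤ 2 * (1 + x ^ 4))
    (p : ℂ) (hp : 0 < p.re) : IntegrableOn (fun x : ℝ => h x * Complex.exp (-(p * x))) (Set.Ioi 0) := by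
  have h1 := ((pow_exp_int 0 p.re hp).add (pow_exp_int 4 p.re hp)).const_mul 2
  refine Integrable.mono' h1 (by fun_prop) ?_
  refine (ae_restrict_iff' measurableSet_Ioi).mpr (Eventually.of_forall fun x hx => ?_)
  rw [norm_mul, norm_exp_mul]
  have := mul_le_mul_of_nonneg_right (hb x hx) (Real.exp_nonneg (-(p.re * x)))
  refine this.trans (le_of_eq ?_)
  simp
  ring

lemma lap_diff (h : ℝ → ℂ) (hm : Measurable h) (hb : ∀ x : ℝ, 0 < x → ‖h x‖ ≤ 2 * (1 + x ^ 4))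
    (p : ℂ) (hp : 0 < p.re) :
    DifferentiableAt ℂ (fun p : ℂ => ∫ x in Set.Ioi (0:ℝ), h x * Complex.exp (-(p * x))) p := by
  have hs : {w : ℂ | p.re / 2 < w.re} ∈ 𝓝 p := by
    refine (isOpen_lt continuous_const Complex.continuous_re).mem_nhds ?_
    simp; linarith
  have h1 := ((pow_exp_int 1 (p.re/2) (by linarith)).add (pow_exp_int 5 (p.re/2) (by linarith))).const_mul 2
  refine (hasDerivAt_integral_of_dominated_loc_of_deriv_le (μ := volume.restrict (Set.Ioi (0:ℝ)))
    (F := fun p x => h x * Complex.exp (-(p * x)))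
    (F' := fun p x => h x * (Complex.exp (-(p * x)) * (-x))) hs ?_ (lap_int h hm hb p hp) ?_ ?_ h1 ?_).2.differentiableAt
  · exact Eventually.of_forall fun p => by fun_prop
  · fun_prop
  · refine (ae_restrict_iff' measurableSet_Ioi).mpr (Eventually.of_forall fun x hx w hw => ?_)
    have hx : 0 < x := hx
    have hw : p.re / 2 < w.re := hw
    rw [norm_mul, norm_mul, norm_exp_mul, norm_neg, Complex.norm_real, Real.norm_of_nonneg hx.le]
    have h3 : Real.exp (-(w.re * x)) ≤ Real.exp (-(p.re/2) * x) := by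
      apply Real.exp_le_exp.mpr; nlinarith
    calc _ ≤ 2 * (1 + x ^ 4) * (Real.exp (-(p.re/2) * x) * x) := by
          gcongr
          exact hb x hx
      _ = _ := by simp; ring
  · refine Eventually.of_forall fun x w _ => ?_
    have := (((hasDerivAt_id w).mul_const (x:ℂ)).neg.cexp).const_mul (h x)
    refine this.congr_deriv ?_
    simp

lemma lap_ident (h : ℝ → ℂ) (hm : Measurable h) (hb : ∀ x : ℝ, 0 < x → ‖h x‖ ≤ 2 * (1 + x ^ 4))
    (G : ℂ → ℂ) (hG : ∀ p : ℂ, 0 < p.re → DifferentiableAt ℂ G p)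
    (hr : ∀ r : ℝ, 0 < r → ∫ x in Set.Ioi (0:ℝ), h x * Complex.exp (-((r:ℂ) * x)) = G r)
    (p : ℂ) (hp : 0 < p.re) : ∫ x in Set.Ioi (0:ℝ), h x * Complex.exp (-(p * x)) = G p := by
  have hop : IsOpen {w : ℂ | 0 < w.re} := isOpen_lt continuous_const Complex.continuous_re
  have hcv : Convex ℝ {w : ℂ | 0 < w.re} := convex_halfSpace_re_gt 0
  have a1 : AnalyticOnNhd ℂ (fun p : ℂ => ∫ x in Set.Ioi (0:ℝ), h x * Complex.exp (-(p * x))) {w : ℂ | 0 < w.re} :=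
    DifferentiableOn.analyticOnNhd (fun w hw => (lap_diff h hm hb w hw).differentiableWithinAt) hop
  have a2 : AnalyticOnNhd ℂ G {w : ℂ | 0 < w.re} :=
    DifferentiableOn.analyticOnNhd (fun w hw => (hG w hw).differentiableWithinAt) hop
  refine a1.eqOn_of_preconnected_of_frequently_eq a2 hcv.isPreconnected (z₀ := 1) (by simp) ?_ hp
  have ht : Tendsto (fun r : ℝ => (r : ℂ)) (𝓝[>] 1) (𝓝[≠] 1) := by
    refine tendsto_nhdsWithin_iff.mpr ⟨?_, ?_⟩
    · exact (Complex.continuous_ofReal.tendsto' 1 1 (by simp)).mono_left nhdsWithin_le_nhds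
    · filter_upwards [self_mem_nhdsWithin] with r hr
      have hr : 1 < r := hr
      simp
      exact_mod_cast hr.ne'
  refine ht.frequently (Eventually.frequently ?_)
  filter_upwards [self_mem_nhdsWithin] with r hr'
  have hr' : 1 < r := hr'
  exact hr r (by linarith)

lemma cpow_two_aux (t : ℝ) : (t:ℂ) ^ ((3:ℂ) - 1) = ((t:ℂ)) ^ 2 := by
  have : (3:ℂ) - 1 = ((2:ℕ):ℂ) := by norm_num
  rw [this, Complex.cpow_natCast]

lemma lap0 (p : ℂ) (hp : 0 < p.re) :
    ∫ x in Set.Ioi (0:ℝ), (x:ℂ) ^ 2 * Complex.exp (-(p * x)) = 2 / p ^ 3 := by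
  refine lap_ident (fun x => (x:ℂ) ^ 2) (by fun_prop) ?_ (fun p => 2 / p ^ 3) ?_ ?_ p hp
  · intro x hx
    rw [norm_pow, Complex.norm_real, Real.norm_of_nonneg hx.le]
    nlinarith [sq_nonneg (x^2 - 1)]
  · intro p hp
    have := y_ne hp
    fun_prop (disch := positivity)
  · intro r hr
    have := Complex.integral_cpow_mul_exp_neg_mul_Ioi (a := 3) (r := r) (by norm_num) hr
    simp only [cpow_two_aux] at this
    rw [this]
    have e : (3:ℂ) = ((2:ℕ):ℂ) + 1 := by norm_num
    have e3 : (1 / (r:ℂ)) ^ (3:ℂ) = (1/(r:ℂ)) ^ 3 := by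
      have : (3:ℂ) = ((3:ℕ):ℂ) := by norm_num
      rw [this, Complex.cpow_natCast]
    rw [e3, e, Complex.Gamma_nat_eq_factorial]
    simp [Nat.factorial]
    ring

lemma lap1_real (r : ℝ) (hr : 0 < r) :
    ∫ x in Set.Ioi (0:ℝ), ((x:ℂ) ^ 2 * (Real.log x : ℂ)) * Complex.exp (-((r:ℂ) * x))
      = (3 - 2 * (eulerGamma : ℂ) - 2 * Complex.log r) / (r:ℂ) ^ 3 := by
  have hr0 : (r:ℂ) ≠ 0 := by exact_mod_cast hr.ne'
  have h := mellin_hasDerivAt_of_isBigO_rpow (a := 4) (b := 0)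
    (f := fun t : ℝ => Complex.exp (-((r:ℂ) * t))) (s := 3) ?_ ?_ (by norm_num) ?_ (by norm_num)
  · have h2 := h.2
    have hev : mellin (fun t : ℝ => Complex.exp (-((r:ℂ) * t))) =ᶠ[𝓝 3] fun a => (1 / (r:ℂ)) ^ a * Complex.Gamma a := by
      have : {w : ℂ | 0 < w.re} ∈ 𝓝 (3:ℂ) :=
        (isOpen_lt continuous_const Complex.continuous_re).mem_nhds (by simp)
      filter_upwards [this] with a ha
      rw [← Complex.integral_cpow_mul_exp_neg_mul_Ioi ha hr]
      rfl
    have e : ((2:ℕ):ℂ) + 1 = 3 := by norm_num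
    have hG := Complex.hasDerivAt_Gamma_nat 2
    rw [e] at hG
    have hpw : HasDerivAt (fun a : ℂ => (1 / (r:ℂ)) ^ a) ((1 / (r:ℂ)) ^ (3:ℂ) * Complex.log (1 / (r:ℂ)) * 1) 3 :=
      (hasDerivAt_id (3:ℂ)).const_cpow (Or.inl (one_div_ne_zero hr0))
    have h3 := (hpw.mul hG).congr_of_eventuallyEq hev
    have h4 := h2.unique h3
    have e3 : (1 / (r:ℂ)) ^ (3:ℂ) = (1/(r:ℂ)) ^ 3 := by
      have : (3:ℂ) = ((3:ℕ):ℂ) := by norm_num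
      rw [this, Complex.cpow_natCast]
    have e5 : Complex.Gamma 3 = 2 := by
      rw [← e, Complex.Gamma_nat_eq_factorial]; norm_num
    have e6 : Complex.log (1 / (r:ℂ)) = - Complex.log r := by
      rw [one_div, Complex.log_inv]
      rw [Complex.arg_ofReal_of_nonneg hr.le]
      exact Real.pi_ne_zero.symm
    rw [e3, e5, e6] at h4
    unfold mellin at h4
    simp only [cpow_two_aux, smul_eq_mul, Complex.real_smul] at h4
    have e7 : ∀ x : ℝ, ((x:ℂ) ^ 2 * (Real.log x : ℂ)) * Complex.exp (-((r:ℂ) * x)) = (x:ℂ) ^ 2 * ((Real.log x : ℂ) * Complex.exp (-((r:ℂ) * x))) := fun x => by ring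
    simp only [e7]
    rw [h4]
    have e8 : ((harmonic 2 : ℚ) : ℂ) = 3 / 2 := by
      simp [harmonic, Finset.sum_range_succ]; norm_num
    rw [e8]
    unfold eulerGamma
    simp [Nat.factorial]
    field_simp
    ring
  · exact Continuous.locallyIntegrable (by fun_prop) |>.locallyIntegrableOn _
  · have h1 := (isLittleO_exp_neg_mul_rpow_atTop hr (-4)).isBigO
    refine (Asymptotics.IsBigO.congr_left h1 (fun x => rfl)).norm_left.congr_left (fun x => ?_) |>.of_norm_left
    rw [norm_exp_mul, Real.norm_of_nonneg (Real.exp_nonneg _)]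
    simp
  · refine Asymptotics.IsBigO.of_bound 1 ?_
    filter_upwards [self_mem_nhdsWithin] with x hx
    have hx : 0 < x := hx
    rw [norm_exp_mul]
    simp
    positivity

lemma lap1_bd (x : ℝ) (hx : 0 < x) : ‖((x:ℂ) ^ 2 * (Real.log x : ℂ))‖ ≤ 2 * (1 + x ^ 4) := by
  rw [norm_mul, norm_pow, Complex.norm_real, Complex.norm_real, Real.norm_of_nonneg hx.le, Real.norm_eq_abs]
  have h1 : x * |Real.log x| ≤ x ^ 2 + 1 := by
    have a1 := Real.log_le_sub_one_of_pos hx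
    have a2 := Real.one_sub_inv_le_log_of_pos hx
    rcases abs_cases (Real.log x) with ⟨h, _⟩ | ⟨h, _⟩
    · rw [h]; nlinarith
    · rw [h]
      have : x * (1 - x⁻¹) ≤ x * Real.log x := by gcongr
      rw [mul_sub, mul_inv_cancel₀ hx.ne'] at this
      nlinarith
  have h2 : x ^ 2 * |Real.log x| ≤ x * (x ^ 2 + 1) := by
    rw [pow_two, mul_assoc]; gcongr; nlinarith
  nlinarith [sq_nonneg (x^2 - 1), sq_nonneg (x^2 - x), sq_nonneg (x - 1)]

lemma lap1 (p : ℂ) (hp : 0 < p.re) :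
    ∫ x in Set.Ioi (0:ℝ), ((x:ℂ) ^ 2 * (Real.log x : ℂ)) * Complex.exp (-(p * x))
      = (3 - 2 * (eulerGamma : ℂ) - 2 * Complex.log p) / p ^ 3 := by
  refine lap_ident (fun x => (x:ℂ) ^ 2 * (Real.log x : ℂ)) (by fun_prop) lap1_bd
    (fun p => (3 - 2 * (eulerGamma : ℂ) - 2 * Complex.log p) / p ^ 3) ?_ lap1_real p hp
  intro p hp
  have h0 := y_ne hp
  have h1 : DifferentiableAt ℂ Complex.log p := (Complex.hasDerivAt_log (Or.inl hp)).differentiableAt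
  exact ((h1.const_mul 2).const_sub _).div (differentiableAt_id.pow 3) (pow_ne_zero 3 h0)

lemma lap_total (c p : ℂ) (hp : 0 < p.re) :
    ∫ x in Set.Ioi (0:ℝ), ((x:ℂ) ^ 2 * (c + (Real.log x : ℂ))) * Complex.exp (-(p * x))
      = (3 - 2 * (eulerGamma : ℂ) + 2 * c - 2 * Complex.log p) / p ^ 3 := by
  have i0 := lap_int (fun x => (x:ℂ) ^ 2) (by fun_prop) (fun x hx => by
    rw [norm_pow, Complex.norm_real, Real.norm_of_nonneg hx.le]
    nlinarith [sq_nonneg (x^2 - 1)]) p hp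
  have i1 := lap_int (fun x => (x:ℂ) ^ 2 * (Real.log x : ℂ)) (by fun_prop) lap1_bd p hp
  have e : ∀ x : ℝ, ((x:ℂ) ^ 2 * (c + (Real.log x : ℂ))) * Complex.exp (-(p * x)) =
    c * ((x:ℂ) ^ 2 * Complex.exp (-(p * x))) + ((x:ℂ) ^ 2 * (Real.log x : ℂ)) * Complex.exp (-(p * x)) :=
    fun x => by ring
  simp only [e]
  rw [integral_add (i0.const_mul c) i1, integral_const_mul, lap0 p hp, lap1 p hp]
  ring

lemma log_div_rhp {P y : ℂ} (hP : 0 < P.re) (hy : 0 < y.re) :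
    Complex.log (P / y) = Complex.log P - Complex.log y := by
  have h1 := Complex.abs_arg_lt_pi_div_two_iff.mpr (Or.inl hP)
  have h2 := Complex.abs_arg_lt_pi_div_two_iff.mpr (Or.inl hy)
  have hpi := Real.pi_pos
  rw [abs_lt] at h1 h2
  have h3 : y.arg ≠ Real.pi := by linarith [h2.2]
  rw [div_eq_mul_inv, Complex.log_mul (y_ne hP) (inv_ne_zero (y_ne hy)), Complex.log_inv _ h3, sub_eq_add_neg]
  rw [Complex.arg_inv, if_neg h3]
  constructor <;> linarith [h1.1, h1.2, h2.1, h2.2]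

open Filter Topology MeasureTheory

noncomputable def kP (y : ℂ) (s x : ℝ) : ℂ :=
  y ^ 3 * ((x:ℂ) * ((x:ℂ) * (eulerGamma + Complex.log y) + ((x * Real.log x : ℝ) : ℂ)))
    * Complex.exp (-((s * y) * x))

noncomputable def fP (y : ℂ) (s x : ℝ) : ℂ := if 0 ≤ x then kP y s x else 0

lemma fP_cont (y : ℂ) (s : ℝ) : Continuous (fP y s) := by
  have h1 := Real.continuous_mul_log
  have h2 : Continuous (kP y s) := by
    unfold kP
    have : Continuous fun x : ℝ => ((x * Real.log x : ℝ) : ℂ) := Complex.continuous_ofReal.comp h1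
    fun_prop
  unfold fP
  refine Continuous.if_le h2 continuous_const continuous_const continuous_id ?_
  intro x hx
  rw [← hx]
  simp [kP]

lemma kP_bound (y : ℂ) (s x : ℝ) (hx : 0 < x) : ‖kP y s x‖ ≤
    ‖y‖ ^ 3 * (2 * (‖(eulerGamma + Complex.log y : ℂ)‖ + 1) * (1 + x ^ 4)) * Real.exp (-((s * y.re) * x)) := by
  unfold kP
  rw [norm_mul, norm_mul, norm_pow, norm_exp_mul]
  have e1 : ((s:ℂ) * y).re = s * y.re := by simp
  rw [e1]
  gcongr
  have h1 := lap1_bd x hx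
  have e : (x:ℂ) * ((x:ℂ) * (eulerGamma + Complex.log y) + ((x * Real.log x : ℝ) : ℂ)) =
    (x:ℂ)^2 * (eulerGamma + Complex.log y) + (x:ℂ) ^ 2 * (Real.log x : ℂ) := by push_cast; ring
  rw [e]
  refine (norm_add_le _ _).trans ?_
  rw [norm_mul, norm_pow, Complex.norm_real, Real.norm_of_nonneg hx.le]
  have := norm_nonneg (eulerGamma + Complex.log y : ℂ)
  have h2 : x ^ 2 ≤ 2 * (1 + x ^ 4) := by nlinarith [sq_nonneg (x^2 - 1)]
  nlinarith [mul_le_mul_of_nonneg_right h2 this]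

lemma fP_decay {y : ℂ} (hy : 0 < y.re) (s : ℝ) (hs : 0 < s) :
    fP y s =O[cocompact ℝ] (fun x : ℝ => |x| ^ (-2 : ℝ)) := by
  rw [cocompact_eq_atBot_atTop, Asymptotics.isBigO_sup]
  constructor
  · refine Asymptotics.IsBigO.of_bound 1 ?_
    filter_upwards [eventually_lt_atBot 0] with x hx
    simp only [fP, if_neg (not_le.mpr hx), norm_zero]
    positivity
  · have h1 := (isLittleO_exp_neg_mul_rpow_atTop (show 0 < s * y.re by positivity) (-6)).bound one_pos
    refine Asymptotics.IsBigO.of_bound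
      (‖y‖ ^ 3 * (2 * (‖(eulerGamma + Complex.log y : ℂ)‖ + 1) * 2)) ?_
    filter_upwards [h1, eventually_ge_atTop 1] with x hx hx1
    have hx0 : 0 < x := by linarith
    simp only [fP, if_pos hx0.le]
    refine (kP_bound y s x hx0).trans ?_
    rw [one_mul, Real.norm_of_nonneg (Real.exp_nonneg _), Real.norm_of_nonneg (by positivity)] at hx
    rw [Real.norm_of_nonneg (by positivity), abs_of_pos hx0]
    rw [← neg_mul]
    have e : (1 + x ^ 4) * x ^ (-6:ℝ) ≤ 2 * x ^ (-2:ℝ) := by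
      have e1 : x ^ (-2:ℝ) = x ^ 4 * x ^ (-6:ℝ) := by
        rw [← Real.rpow_natCast, ← Real.rpow_add hx0]; norm_num
      rw [e1, ← mul_assoc]
      gcongr
      have : 1 ≤ x ^ 4 := one_le_pow₀ hx1
      linarith
    calc _ ≤ ‖y‖ ^ 3 * (2 * (‖(eulerGamma + Complex.log y : ℂ)‖ + 1) * (1 + x ^ 4)) * x ^ (-6:ℝ) := by gcongr
      _ = ‖y‖ ^ 3 * (2 * (‖(eulerGamma + Complex.log y : ℂ)‖ + 1)) * ((1 + x ^ 4) * x ^ (-6:ℝ)) := by ring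
      _ ≤ ‖y‖ ^ 3 * (2 * (‖(eulerGamma + Complex.log y : ℂ)‖ + 1)) * (2 * x ^ (-2:ℝ)) := by gcongr
      _ = _ := by ring

lemma fP_fourier {y : ℂ} (hy : 0 < y.re) (s : ℝ) (hs : 0 < s) (n : ℤ) :
    FourierTransform.fourier (fP y s) (n:ℝ) = FFn (s + zFn y n) := by
  have hy0 := y_ne hy
  rw [Real.fourier_real_eq_integral_exp_smul]
  set P : ℂ := s * y + 2 * Real.pi * n * Complex.I with hP
  have hPre : 0 < P.re := by
    simp [hP]; positivity
  have hP0 := y_ne hPre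
  have e1 : (fun v : ℝ => Complex.exp (↑(-2 * Real.pi * v * n) * Complex.I) • fP y s v) =
      Set.indicator (Set.Ici (0:ℝ)) (fun x : ℝ => y ^ 3 * (((x:ℂ) ^ 2 * ((eulerGamma + Complex.log y) + (Real.log x : ℂ))) * Complex.exp (-(P * x)))) := by
    funext v
    by_cases hv : 0 ≤ v
    · rw [Set.indicator_of_mem (by exact hv)]
      simp only [fP, if_pos hv, kP, smul_eq_mul]
      have : Complex.exp (-(P * v)) = Complex.exp (↑(-2 * Real.pi * v * n) * Complex.I) * Complex.exp (-((s * y) * v)) := by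
        rw [← Complex.exp_add]
        congr 1
        rw [hP]
        push_cast
        ring
      rw [this]
      push_cast
      ring
    · rw [Set.indicator_of_notMem (by exact hv)]
      simp [fP, if_neg hv]
  rw [e1, integral_indicator measurableSet_Ici, integral_Ici_eq_integral_Ioi, integral_const_mul,
    lap_total _ _ hPre, z_eq hy, ← hP]
  unfold FFn
  rw [log_div_rhp hPre hy]
  field_simp
  ring

lemma F_summable {y : ℂ} (hy : 0 < y.re) (s : ℝ) (hs : 0 < s) :
    Summable (fun n : ℤ => FFn (s + zFn y n)) := by
  obtain ⟨C, hC, hb⟩ := FB hy s hs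
  refine Summable.of_norm_bounded ((sum_bound.mul_left ((s + 1) ^ (-(5/4) : ℝ))).mul_left C) fun n => ?_
  exact hb n s hs.le (by linarith [abs_nonneg (n:ℝ)])

lemma log_nat_mul {y : ℂ} (hy : 0 < y.re) (m : ℕ) :
    Complex.log (((m:ℂ) + 1) * y) = ((Real.log ((m:ℝ)+1) : ℝ) : ℂ) + Complex.log y := by
  have := Complex.log_ofReal_mul (show (0:ℝ) < (m:ℝ)+1 by positivity) (y_ne hy)
  push_cast at this ⊢
  exact this

lemma poisson {y : ℂ} (hy : 0 < y.re) (s : ℝ) (hs : 0 < s) :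
    ∑' n : ℤ, FFn (s + zFn y n) = ∑' m : ℕ, y * (((m:ℂ) + 1) * y) ^ 2 *
      (eulerGamma + Complex.log (((m:ℂ) + 1) * y)) * Complex.exp (-(s * (((m:ℂ) + 1) * y))) := by
  have h := Real.tsum_eq_tsum_fourier_of_rpow_decay_of_summable (fP_cont y s) (b := 2) (by norm_num)
    (fP_decay hy s hs) ((F_summable hy s hs).congr fun n => (fP_fourier hy s hs n).symm) 0
  simp only [fP_fourier hy s hs, zero_add, QuotientAddGroup.mk_zero, fourier_eval_zero, mul_one] at h
  rw [← h]
  have h1 : ∀ m : ℕ, fP y s ((m:ℤ) + 1 : ℤ) = y * (((m:ℂ) + 1) * y) ^ 2 *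
      (eulerGamma + Complex.log (((m:ℂ) + 1) * y)) * Complex.exp (-(s * (((m:ℂ) + 1) * y))) := by
    intro m
    rw [log_nat_mul hy]
    have : (0:ℝ) ≤ (((m:ℤ) + 1 : ℤ) : ℝ) := by push_cast; positivity
    simp only [fP, if_pos this, kP]
    push_cast
    have e : ((s:ℂ) * y * ((m:ℂ)+1)) = (s * (((m:ℂ) + 1) * y)) := by ring
    rw [e]
    ring
  have h2 : ∀ m : ℕ, fP y s ((-((m:ℤ) + 1) : ℤ)) = 0 := by
    intro m
    have : ¬ (0:ℝ) ≤ ((-((m:ℤ) + 1) : ℤ) : ℝ) := by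
      push_cast; have : (0:ℝ) ≤ m := Nat.cast_nonneg m
      linarith
    simp only [fP, if_neg this]
  have h0 : fP y s ((0:ℤ):ℝ) = 0 := by simp [fP, kP]
  have hinj : Function.Injective (fun m : ℕ => (m:ℤ) + 1) := fun a b hab => by simpa using hab
  have := hinj.tsum_eq (f := fun n : ℤ => fP y s n) ?_
  · rw [← this]
    exact tsum_congr h1
  · intro n hn
    rw [Function.mem_support] at hn
    by_contra hc
    apply hn
    have hle : n ≤ 0 := by
      by_contra hlt
      exact hc ⟨(n-1).toNat, by simp; omega⟩
    rcases hle.lt_or_eq with hlt | heq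
    · have := h2 (-n-1).toNat
      have e : -(((-n-1).toNat : ℤ) + 1) = n := by omega
      rw [e] at this
      exact this
    · subst heq; exact h0

open Filter Topology MeasureTheory

lemma zFn_neg (y : ℂ) (n : ℤ) : zFn y (-n) = -zFn y n := by
  unfold zFn; push_cast; ring

lemma psiTerm_eq {y : ℂ} (hy : 0 < y.re) (n : ℕ) :
    psiTerm y n = PhiFn (zFn y ((n:ℤ)+1)) + PhiFn (zFn y (-((n:ℤ)+1))) := by
  rw [psi1_eq hy _ (by omega), psi1_eq hy _ (by omega), zFn_neg]
  have hz : zFn y ((n:ℤ)+1) = 2 * (Real.pi : ℂ) * Complex.I * ((n : ℂ) + 1) / y := by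
    unfold zFn; push_cast; ring
  unfold psiTerm
  rw [← hz]
  set z := zFn y ((n:ℤ)+1) with hzd
  have hy0 := y_ne hy
  have him : 0 < z.im := by
    have e : z = ((2 * Real.pi * ((n:ℝ)+1) : ℝ) : ℂ) * (Complex.I / y) := by
      rw [hz]; push_cast; ring
    have hI : (Complex.I / y).im = y.re / Complex.normSq y := by
      simp [Complex.div_im]
    rw [e, Complex.im_ofReal_mul, hI]
    have := Complex.normSq_pos.mpr hy0
    positivity
  have hz0 : z ≠ 0 := by
    intro h; rw [h] at him; simp at him
  have hl : Complex.log (-z) = Complex.log z - Real.pi * Complex.I := by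
    unfold Complex.log
    rw [norm_neg, Complex.arg_neg_eq_arg_sub_pi_of_im_pos him]
    push_cast; ring
  have hg : gFn z / 2 + gFn (-z) / 2 = y / (4 * ((n:ℂ)+1)) := by
    unfold gFn
    rw [hl]
    have e1 : Complex.log z / z / 2 + (Complex.log z - Real.pi * Complex.I) / (-z) / 2
      = Real.pi * Complex.I / (2 * z) := by
      field_simp; ring
    rw [e1, hz]
    have : ((n:ℂ)+1) ≠ 0 := by exact_mod_cast Nat.succ_ne_zero n
    have hpi : (Real.pi:ℂ) ≠ 0 := by exact_mod_cast Real.pi_ne_zero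
    have hI := Complex.I_ne_zero
    field_simp
    norm_num
  rw [← hg]
  ring

noncomputable def GFn (t : ℂ) : ℂ := 1/2 + 1/(Complex.exp t - 1) - 1/t

lemma exp_sub_ne {t : ℂ} (ht : 0 < t.re) : Complex.exp t - 1 ≠ 0 := by
  intro h
  have h1 : Complex.exp t = 1 := by linear_combination h
  have h2 := Complex.norm_exp t
  rw [h1, norm_one] at h2
  have := Real.one_lt_exp_iff.mpr ht
  linarith

lemma exp_kernel_int {t : ℂ} (ht : 0 < t.re) :
    IntegrableOn (fun s : ℝ => (qFn s : ℂ) * (t^2 * Complex.exp (-(t * s)))) (Set.Ioi 0) := by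
  refine Integrable.mono' ((pow_exp_int 0 t.re ht).const_mul (‖t‖^2)) ?_ ?_
  · refine (qFn_meas.mul (Measurable.const_mul ?_ _)).aestronglyMeasurable
    exact (by fun_prop : Continuous (fun s : ℝ => Complex.exp (-(t * s)))).measurable
  · refine Eventually.of_forall fun s => ?_
    rw [norm_mul, norm_mul, norm_exp_mul, norm_pow, pow_zero, one_mul, ← neg_mul]
    have := qFn_norm_le s
    calc _ ≤ 1 * (‖t‖^2 * Real.exp (-t.re * s)) := by gcongr
      _ = _ := one_mul _

lemma exp_kernel_bd {t : ℂ} (ht : 0 < t.re) :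
    ∫ s in Set.Ioi (0:ℝ), ‖(qFn s : ℂ) * (t^2 * Complex.exp (-(t * s)))‖ ≤ ‖t‖^2 / t.re := by
  have h1 : ∫ s in Set.Ioi (0:ℝ), ‖t‖^2 * Real.exp (-t.re * s) = ‖t‖^2 / t.re := by
    rw [integral_const_mul, integral_exp_mul_Ioi (by linarith)]
    simp
    field_simp
  rw [← h1]
  have := (pow_exp_int 0 t.re ht).const_mul (‖t‖^2)
  simp only [pow_zero, one_mul] at this
  refine setIntegral_mono_on (exp_kernel_int ht).norm this measurableSet_Ioi ?_
  intro s hs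
  rw [norm_mul, norm_mul, norm_exp_mul, norm_pow, ← neg_mul]
  have := qFn_norm_le s
  calc _ ≤ 1 * (‖t‖^2 * Real.exp (-t.re * s)) := by gcongr
    _ = _ := one_mul _

lemma G_int {t : ℂ} (ht : 0 < t.re) :
    ∫ s in Set.Ioi (0:ℝ), (qFn s : ℂ) * (t^2 * Complex.exp (-(t * s))) = GFn t := by
  have ht0 : t ≠ 0 := y_ne ht
  have hd : ∀ (c : ℂ) (x : ℝ), HasDerivAt (fun x : ℝ => c * Complex.exp (-(t * x))) (c * (-t) * Complex.exp (-(t * x))) x := by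
    intro c x
    have h1 : HasDerivAt (fun x : ℝ => -(t * (x:ℂ))) (-t) x := by
      exact ((Complex.ofRealCLM.hasDerivAt (x := x)).const_mul t).neg.congr_deriv (by simp)
    exact ((h1.cexp).const_mul c).congr_deriv (by ring)
  have H := em_tendsto (fun x => (-(1/t)) * Complex.exp (-(t*x))) (fun x => 1 * Complex.exp (-(t*x)))
    (fun x => (-t) * Complex.exp (-(t*x))) (fun x => t^2 * Complex.exp (-(t*x))) ?_ ?_ ?_ (exp_kernel_int ht)
  · refine tendsto_nhds_unique H ?_
    set r := Complex.exp (-t) with hr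
    have hk : ∀ k : ℕ, Complex.exp (-(t * ((k:ℝ):ℂ))) = r ^ k := by
      intro k
      rw [hr, ← Complex.exp_nat_mul]; congr 1; push_cast; ring
    have hk1 : ∀ k : ℕ, Complex.exp (-(t * (((k:ℝ)+1 : ℝ):ℂ))) = r ^ k * r := by
      intro k
      rw [hr, ← Complex.exp_nat_mul, ← Complex.exp_add]; congr 1; push_cast; ring
    have hrn : ‖r‖ < 1 := by
      rw [hr, Complex.norm_exp]; simpa using ht
    have hs := (hasSum_geometric_of_norm_lt_one hrn).mul_left ((1 + r)/2 + (1/t) * (r - 1))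
    have he : GFn t = ((1 + r)/2 + (1/t) * (r - 1)) * (1 - r)⁻¹ := by
      have h1 := exp_sub_ne ht
      have hE : r * Complex.exp t = 1 := by rw [hr, ← Complex.exp_add]; simp
      have hr0 : r ≠ 0 := Complex.exp_ne_zero _
      have hEr : Complex.exp t = 1 / r := by field_simp; linear_combination hE
      have h2 : 1 - r ≠ 0 := by
        intro h
        have : r = 1 := by linear_combination -h
        rw [this] at hrn; simp at hrn
      unfold GFn
      rw [hEr]
      have h3 : 1 / r - 1 = (1 - r) / r := by field_simp
      rw [h3]
      field_simp
      ring
    rw [he]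
    refine hs.tendsto_sum_nat.congr fun K => ?_
    refine Finset.sum_congr rfl fun k _ => ?_
    rw [hk, hk1]
    ring
  · intro x _
    convert hd (-(1/t)) x using 1
    field_simp
  · intro x _
    convert hd 1 x using 1
    ring
  · intro x _
    convert hd (-t) x using 1
    ring

lemma coef_bound (y : ℂ) (hy : 0 < y.re) : ∃ A : ℝ, 0 < A ∧ ∀ m : ℕ,
    ‖(eulerGamma:ℂ) + Complex.log (((m:ℂ) + 1) * y)‖ ≤ A * ((m:ℝ)+1) := by
  refine ⟨‖(eulerGamma:ℂ)‖ + ‖Complex.log y‖ + 1, by positivity, fun m => ?_⟩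
  rw [log_nat_mul hy]
  have h1 : ‖((Real.log ((m:ℝ)+1) : ℝ) : ℂ)‖ ≤ (m:ℝ)+1 := by
    rw [Complex.norm_real, Real.norm_of_nonneg (Real.log_nonneg (by linarith [(Nat.cast_nonneg m : (0:ℝ) ≤ m)]))]
    have := Real.log_le_sub_one_of_pos (show (0:ℝ) < (m:ℝ)+1 by positivity)
    linarith
  have h2 := norm_add_le (eulerGamma:ℂ) (((Real.log ((m:ℝ)+1) : ℝ) : ℂ) + Complex.log y)
  have h3 := norm_add_le ((Real.log ((m:ℝ)+1) : ℝ) : ℂ) (Complex.log y)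
  have hm : (0:ℝ) ≤ m := Nat.cast_nonneg m
  nlinarith [norm_nonneg (eulerGamma:ℂ), norm_nonneg (Complex.log y), mul_nonneg hm (norm_nonneg (eulerGamma:ℂ)), mul_nonneg hm (norm_nonneg (Complex.log y))]

lemma pow_geom_summable (k : ℕ) (c : ℝ) (hc : 0 < c) :
    Summable (fun m : ℕ => ((m:ℝ)+1)^k * Real.exp (-(c * ((m:ℝ)+1)))) := by
  have h : ‖Real.exp (-c)‖ < 1 := by
    rw [Real.norm_of_nonneg (Real.exp_pos _).le]; simpa using hc
  have h2 := (summable_nat_add_iff (G := ℝ) 1).mpr (summable_pow_mul_geometric_of_norm_lt_one (R := ℝ) k h)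
  have h3 : ∀ m : ℕ, ((m:ℝ)+1)^k * Real.exp (-(c * ((m:ℝ)+1))) = ((m+1:ℕ):ℝ)^k * Real.exp (-c) ^ (m+1) := by
    intro m
    have e : -(c * ((m:ℝ)+1)) = ((m+1:ℕ):ℝ) * (-c) := by push_cast; ring
    rw [e, Real.exp_nat_mul, Nat.cast_add, Nat.cast_one]
  simp only [h3]
  exact h2

lemma w_re (y : ℂ) (m : ℕ) : (((m:ℂ)+1) * y).re = ((m:ℝ)+1) * y.re := by
  have := Complex.re_ofReal_mul ((m:ℝ)+1) y
  push_cast at this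
  exact this

lemma w_norm (y : ℂ) (m : ℕ) : ‖((m:ℂ)+1) * y‖ = ((m:ℝ)+1) * ‖y‖ := by
  rw [norm_mul]
  congr 1
  have : ((m:ℂ)+1) = (((m:ℝ)+1 : ℝ) : ℂ) := by push_cast; rfl
  rw [this, Complex.norm_real, Real.norm_of_nonneg (by positivity)]

lemma int_poisson {y : ℂ} (hy : 0 < y.re) (ε : ℝ) (hε : 0 < ε) :
    Summable (fun n : ℤ => PhiFn (ε + zFn y n)) ∧
    HasSum (fun m : ℕ => y * (eulerGamma + Complex.log (((m:ℂ) + 1) * y)) *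
      Complex.exp (-(ε * (((m:ℂ) + 1) * y))) * GFn (((m:ℂ) + 1) * y)) (∑' n : ℤ, PhiFn (ε + zFn y n)) := by
  have A := hasSum_integral_of_summable_integral_norm
    (F := fun (n:ℤ) (s:ℝ) => (qFn s : ℂ) * FFn (ε + zFn y n + s)) (μ := volume.restrict (Set.Ioi 0))
    (fun n => Phi_int hy n ε hε.le (by positivity)) ?_
  swap
  · obtain ⟨C, hC, hb⟩ := Phi_bound hy ε hε
    refine Summable.of_nonneg_of_le (fun m => integral_nonneg fun s => norm_nonneg _) (fun n => ?_) (sum_bound.mul_left C)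
    exact hb n ε hε.le (by linarith [abs_nonneg (n:ℝ)])
  · refine ⟨A.summable, ?_⟩
    have hA := A.tsum_eq
    have hA2 : ∑' n : ℤ, PhiFn (ε + zFn y n) = ∫ s in Set.Ioi (0:ℝ), ∑' n : ℤ, (qFn s : ℂ) * FFn (ε + zFn y n + s) := hA
    rw [hA2]
    obtain ⟨C, hC, hb⟩ := coef_bound y hy
    have wre : ∀ m : ℕ, 0 < (((m:ℂ)+1) * y).re := fun m => by rw [w_re]; positivity
    have B := hasSum_integral_of_summable_integral_norm
      (F := fun (m:ℕ) (s:ℝ) => (y * (eulerGamma + Complex.log (((m:ℂ) + 1) * y)) *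
      Complex.exp (-(ε * (((m:ℂ) + 1) * y)))) * ((qFn s : ℂ) * ((((m:ℂ) + 1) * y)^2 * Complex.exp (-((((m:ℂ) + 1) * y) * s)))))
      (μ := volume.restrict (Set.Ioi 0)) (fun m => (exp_kernel_int (wre m)).const_mul _) ?_
    · simp only [integral_const_mul, G_int (wre _)] at B
      rw [show (∫ s in Set.Ioi (0:ℝ), ∑' n : ℤ, (qFn s : ℂ) * FFn (ε + zFn y n + s)) = _ from ?_]
      · exact B
      refine setIntegral_congr_fun measurableSet_Ioi fun s hs => ?_
      have hs : 0 < s := hs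
      have P := poisson hy (ε + s) (by positivity)
      rw [tsum_mul_left]
      have e : ∑' n : ℤ, FFn (ε + zFn y n + s) = ∑' n : ℤ, FFn ((ε + s : ℝ) + zFn y n) := by
        refine tsum_congr fun n => ?_
        congr 1; push_cast; ring
      rw [e, P, ← tsum_mul_left]
      refine tsum_congr fun m => ?_
      have e2 : Complex.exp (-(((ε + s : ℝ):ℂ) * (((m:ℂ) + 1) * y))) = Complex.exp (-(ε * (((m:ℂ) + 1) * y))) *
        Complex.exp (-((((m:ℂ) + 1) * y) * s)) := by
        rw [← Complex.exp_add]; congr 1; push_cast; ring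
      rw [e2]
      ring
    · refine Summable.of_nonneg_of_le (fun m => integral_nonneg fun s => norm_nonneg _) (fun m => ?_)
        ((pow_geom_summable 3 (ε * y.re) (by positivity)).mul_left (‖y‖ * C * (‖y‖^2 / y.re)))
      simp only [norm_mul _ ((qFn _ : ℂ) * _)]
      rw [integral_const_mul]
      have h1 := exp_kernel_bd (wre m)
      have h2 : ‖Complex.exp (-(ε * (((m:ℂ) + 1) * y)))‖ = Real.exp (-(ε * y.re * ((m:ℝ)+1))) := by
        rw [Complex.norm_exp, Complex.neg_re, Complex.re_ofReal_mul, w_re]; congr 1; ring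
      have h3 : ‖((m:ℂ)+1) * y‖^2 / (((m:ℂ)+1) * y).re ≤ ((m:ℝ)+1)^2 * (‖y‖^2 / y.re) := by
        rw [w_norm, w_re]
        have hm : (1:ℝ) ≤ (m:ℝ)+1 := by linarith [(Nat.cast_nonneg m : (0:ℝ) ≤ m)]
        rw [mul_pow, mul_div_mul_comm]
        gcongr
        exact div_le_self (by positivity) hm
      calc _ ≤ (‖y‖ * (C * ((m:ℝ)+1)) * Real.exp (-(ε * y.re * ((m:ℝ)+1)))) * (((m:ℝ)+1)^2 * (‖y‖^2 / y.re)) := by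
            rw [norm_mul, norm_mul, h2]
            gcongr
            · exact hb m
            · exact h1.trans h3
        _ = _ := by ring

open Filter Topology MeasureTheory

lemma Phi_norm_bd {y : ℂ} (hy : 0 < y.re) : ∃ C : ℝ, 0 < C ∧ ∀ (n : ℤ) (x : ℝ), 0 ≤ x → n ≠ 0 →
    ‖PhiFn (x + zFn y n)‖ ≤ C * (1 + |(n:ℝ)|) ^ (-(5/4) : ℝ) := by
  obtain ⟨C, hC, hb⟩ := Phi_bound hy 1 one_pos
  refine ⟨C, hC, fun n x hx hn => (norm_integral_le_integral_norm _).trans (hb n x hx ?_)⟩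
  have : (1:ℝ) ≤ |(n:ℝ)| := by exact_mod_cast Int.one_le_abs hn
  linarith

lemma nat_sum_bound : Summable (fun n : ℕ => (1 + |(((n:ℤ)+1 : ℤ) : ℝ)|) ^ (-(5/4) : ℝ)) := by
  have hinj : Function.Injective (fun m : ℕ => (m:ℤ) + 1) := fun a b hab => by simpa using hab
  exact sum_bound.comp_injective hinj

lemma pair_bd {y : ℂ} (hy : 0 < y.re) : ∃ C : ℝ, 0 < C ∧ ∀ (n : ℕ) (x : ℝ), 0 ≤ x →
    ‖PhiFn (x + zFn y ((n:ℤ)+1)) + PhiFn (x + zFn y (-((n:ℤ)+1)))‖ ≤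
      C * (1 + |(((n:ℤ)+1 : ℤ) : ℝ)|) ^ (-(5/4) : ℝ) := by
  obtain ⟨C, hC, hb⟩ := Phi_norm_bd hy
  refine ⟨2 * C, by positivity, fun n x hx => (norm_add_le _ _).trans ?_⟩
  have h1 := hb ((n:ℤ)+1) x hx (by omega)
  have h2 := hb (-((n:ℤ)+1)) x hx (by omega)
  rw [Int.cast_neg, abs_neg] at h2
  linarith

lemma psi_summable {y : ℂ} (hy : 0 < y.re) : Summable (psiTerm y) := by
  obtain ⟨C, hC, hb⟩ := pair_bd hy
  refine Summable.of_norm_bounded (nat_sum_bound.mul_left C) fun n => ?_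
  rw [psiTerm_eq hy]
  have := hb n 0 le_rfl
  simpa using this

lemma nz_limit {y : ℂ} (hy : 0 < y.re) :
    Tendsto (fun ε : ℝ => ∑' n : ℕ, (PhiFn (ε + zFn y ((n:ℤ)+1)) + PhiFn (ε + zFn y (-((n:ℤ)+1)))))
      (𝓝[>] 0) (𝓝 (∑' n, psiTerm y n)) := by
  obtain ⟨C, hC, hb⟩ := pair_bd hy
  refine tendsto_tsum_of_dominated_convergence (nat_sum_bound.mul_left C) ?_ ?_
  · intro n
    rw [psiTerm_eq hy]
    have hp : (0:ℝ) < |(((n:ℤ)+1 : ℤ) : ℝ)| := by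
      rw [abs_pos]; exact_mod_cast (by omega : ((n:ℤ)+1) ≠ 0)
    have h1 := Phi_cont hy ((n:ℤ)+1) 0 le_rfl (by linarith)
    have h2 := Phi_cont hy (-((n:ℤ)+1)) 0 le_rfl (by rw [Int.cast_neg, abs_neg]; linarith)
    simp only [zero_add, Complex.ofReal_zero] at h1 h2
    exact h1.add h2
  · filter_upwards [self_mem_nhdsWithin] with ε hε
    intro n
    exact hb n ε (le_of_lt hε)

lemma split_sum {y : ℂ} (hy : 0 < y.re) (ε : ℝ) (hε : 0 < ε) :
    ∑' n : ℤ, PhiFn (ε + zFn y n) = PhiFn ε +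
      ∑' n : ℕ, (PhiFn (ε + zFn y ((n:ℤ)+1)) + PhiFn (ε + zFn y (-((n:ℤ)+1)))) := by
  have hs := (int_poisson hy ε hε).1
  have i1 : Function.Injective (fun m : ℕ => (m:ℤ) + 1) := fun a b hab => by simpa using hab
  have i2 : Function.Injective (fun m : ℕ => -((m:ℤ) + 1)) := fun a b hab => by simpa using hab
  have s1 := hs.comp_injective i1
  have s2 := hs.comp_injective i2
  have h := HasSum.of_add_one_of_neg_add_one (f := fun n : ℤ => PhiFn (ε + zFn y n)) s1.hasSum s2.hasSum
  have ha : ∑' n : ℕ, (PhiFn (ε + zFn y ((n:ℤ)+1)) + PhiFn (ε + zFn y (-((n:ℤ)+1)))) = _ :=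
    Summable.tsum_add s1 s2
  rw [h.tsum_eq, ha]
  have h0 : zFn y 0 = 0 := by simp [zFn]
  rw [h0, add_zero]
  simp only [Function.comp_apply]
  ring

lemma zFn_zero (y : ℂ) : zFn y 0 = 0 := by simp [zFn]

lemma Phi_shift (ε : ℝ) (hε : 0 < ε) : PhiFn ε = DeltaFn ε + PhiFn ((1 + ε : ℝ)) := by
  have hy : 0 < (1:ℂ).re := by simp
  have h1 := Phi_tend hy 0 ε hε.le (by simpa using hε)
  have h2 := Phi_tend hy 0 (1 + ε) (by positivity) (by simp; positivity)
  simp only [zFn_zero, add_zero] at h1 h2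
  have h3 := (tendsto_add_atTop_iff_nat 1).mpr h1
  simp only [Finset.sum_range_succ'] at h3
  refine tendsto_nhds_unique h3 ?_
  have h4 := (h2.const_add (DeltaFn ε))
  refine h4.congr fun K => ?_
  rw [add_comm]
  congr 1
  · refine Finset.sum_congr rfl fun k _ => ?_
    congr 1; push_cast; ring
  · simp

lemma Phi_one_lim : Tendsto (fun ε : ℝ => PhiFn ((1 + ε : ℝ))) (𝓝[>] 0) (𝓝 (-(gamma1 : ℂ))) := by
  have h := Phi_cont (y := 1) (by simp) 0 1 zero_le_one (by simp)
  simp only [zFn_zero, add_zero, Complex.ofReal_one, Phi_one] at h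
  exact h

noncomputable def STot (y : ℂ) (ε : ℝ) : ℂ := ∑' m : ℕ, y * (eulerGamma + Complex.log (((m:ℂ) + 1) * y)) *
      Complex.exp (-(ε * (((m:ℂ) + 1) * y))) * GFn (((m:ℂ) + 1) * y)

lemma STot_lim {y : ℂ} (hy : 0 < y.re) :
    Tendsto (fun ε : ℝ => STot y ε + (Complex.log ε)^2/2 + Complex.log ε / ε / 2) (𝓝[>] 0)
      (𝓝 (∑' n, psiTerm y n - gamma1)) := by
  have h := (nz_limit hy).add Phi_one_lim
  have hl : Tendsto (fun ε : ℝ => (Complex.log ((ε:ℂ) + 1))^2/2 - gFn ((ε:ℂ)+1)/2) (𝓝[>] 0) (𝓝 0) := by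
    have : ContinuousAt (fun ε : ℝ => (Complex.log ((ε:ℂ) + 1))^2/2 - Complex.log ((ε:ℂ) + 1)/((ε:ℂ)+1)/2) 0 := by
      have hc : ContinuousAt (fun ε : ℝ => (ε:ℂ) + 1) 0 := by fun_prop
      have hlg : ContinuousAt (fun ε : ℝ => Complex.log ((ε:ℂ) + 1)) 0 :=
        ContinuousAt.clog hc (by simp [Complex.slitPlane])
      refine ((hlg.pow 2).div_const 2).sub ((hlg.div hc (by simp)).div_const 2)
    have := this.tendsto
    simp at this
    exact this.mono_left nhdsWithin_le_nhds
  have h2 := h.add hl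
  simp only [add_zero, ← sub_eq_add_neg] at h2
  refine h2.congr' ?_
  filter_upwards [self_mem_nhdsWithin] with ε hε
  have hε : 0 < ε := hε
  have e1 : STot y ε = _ := (int_poisson hy ε hε).2.tsum_eq
  rw [e1, split_sum hy ε hε, Phi_shift ε hε]
  unfold DeltaFn gFn
  ring

open Filter Topology MeasureTheory

noncomputable def hR (n : ℕ) : ℝ := ∑ k ∈ Finset.range n, 1 / ((k:ℝ) + 1)

lemma hR_succ (n : ℕ) : hR (n+1) = hR n + 1 / ((n:ℝ)+1) := by
  unfold hR; rw [Finset.sum_range_succ]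

lemma hR_zero : hR 0 = 0 := by simp [hR]

lemma hR_tendsto : Tendsto (fun n : ℕ => hR n - Real.log n) atTop (𝓝 eulerGamma) := by
  refine Real.tendsto_harmonic_sub_log.congr fun n => ?_
  unfold hR harmonic
  push_cast
  simp [one_div]

noncomputable def aR (n : ℕ) : ℝ := Real.log ((n:ℝ)+1) - hR (n+1) + eulerGamma + 1 / (2 * ((n:ℝ)+1))

lemma inv_tendsto : Tendsto (fun n : ℕ => 1 / ((n:ℝ)+1)) atTop (𝓝 0) := tendsto_one_div_add_atTop_nhds_zero_nat

lemma hR_tendsto' : Tendsto (fun n : ℕ => hR (n+1) - Real.log ((n:ℝ)+1)) atTop (𝓝 eulerGamma) := by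
  have := (tendsto_add_atTop_iff_nat 1).mpr hR_tendsto
  refine this.congr fun n => ?_
  push_cast; rfl

lemma aR_tendsto : Tendsto aR atTop (𝓝 0) := by
  have h := (inv_tendsto.const_mul (1/2)).sub (hR_tendsto'.sub_const eulerGamma)
  simp only [mul_zero, sub_self] at h
  refine h.congr fun n => ?_
  unfold aR
  have : (n:ℝ)+1 ≠ 0 := by positivity
  field_simp
  ring

lemma log_ratio (n : ℕ) : Real.log ((n:ℝ)+1+1) - Real.log ((n:ℝ)+1) = Real.log (1 + 1/((n:ℝ)+1)) := by
  rw [← Real.log_div (by positivity) (by positivity)]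
  congr 1; field_simp

lemma aR_diff (n : ℕ) : aR n - aR (n+1) = 1/2 * (1/((n:ℝ)+1) + 1/((n:ℝ)+1+1)) - Real.log (1 + 1/((n:ℝ)+1)) := by
  rw [← log_ratio]
  unfold aR
  rw [hR_succ (n+1)]
  push_cast
  field_simp
  ring

lemma aR_antitone : Antitone aR := by
  refine antitone_nat_of_succ_le fun n => ?_
  have h := aR_diff n
  have ht : (0:ℝ) < 1 + 1/((n:ℝ)+1) := by positivity
  have h0 : 0 ≤ Real.log (1 + 1/((n:ℝ)+1)) := Real.log_nonneg (by
    have : (0:ℝ) ≤ 1/((n:ℝ)+1) := by positivity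
    linarith)
  have h1 := Real.self_le_sinh_iff.mpr h0
  rw [Real.sinh_log ht] at h1
  have e : (1 + 1/((n:ℝ)+1) - (1 + 1/((n:ℝ)+1))⁻¹)/2 = 1/2 * (1/((n:ℝ)+1) + 1/((n:ℝ)+1+1)) := by
    have : (1 + 1/((n:ℝ)+1)) = ((n:ℝ)+1+1)/((n:ℝ)+1) := by field_simp
    rw [this]
    field_simp
    ring
  rw [e] at h1
  linarith

lemma aR_nonneg (n : ℕ) : 0 ≤ aR n := aR_antitone.le_of_tendsto aR_tendsto n

lemma aR_le (n : ℕ) : aR n ≤ 1 / ((n:ℝ)+1)^2 := by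
  have hm : Monotone (fun n : ℕ => aR n - 1/((n:ℝ)+1)^2) := by
    refine monotone_nat_of_le_succ fun n => ?_
    have h := aR_diff n
    have h1 := Real.le_log_one_add_of_nonneg (show (0:ℝ) ≤ 1/((n:ℝ)+1) by positivity)
    have e1 : 2 * (1/((n:ℝ)+1)) / (1/((n:ℝ)+1) + 2) = 2 / (2*((n:ℝ)+1)+1) := by
      field_simp
      ring
    rw [e1] at h1
    push_cast
    set x := (n:ℝ)+1 with hx
    have hx1 : 0 < x := by positivity
    have e2 : 1/2 * (1/x+1/(x+1)) - 2/(2*x+1) ≤ 1/x^2 - 1/(x+1)^2 := by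
      have e3 : 1/x^2 - 1/(x+1)^2 - (1/2 * (1/x+1/(x+1)) - 2/(2*x+1)) =
        (2*(2*x+1)^2 - x*(x+1)) / (2*x^2*(x+1)^2*(2*x+1)) := by
        field_simp
        ring
      have : 0 ≤ (2*(2*x+1)^2 - x*(x+1)) / (2*x^2*(x+1)^2*(2*x+1)) := by
        apply div_nonneg
        · nlinarith
        · positivity
      linarith
    linarith
  have ht : Tendsto (fun n : ℕ => aR n - 1/((n:ℝ)+1)^2) atTop (𝓝 0) := by
    have := aR_tendsto.sub (inv_tendsto.pow 2)
    simpa [one_div, inv_pow] using this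
  have := hm.ge_of_tendsto ht n
  simpa using this

lemma hR_sum (N : ℕ) : ∑ m ∈ Finset.range N, aR m =
    Real.log (N.factorial) - ((N:ℝ)+1/2) * hR N + N + eulerGamma * N := by
  induction N with
  | zero => simp [hR_zero]
  | succ n ih =>
    rw [Finset.sum_range_succ, ih, aR, hR_succ, Nat.factorial_succ]
    push_cast
    rw [Real.log_mul (by positivity) (by positivity)]
    field_simp
    ring

lemma inv_sq_summable : Summable (fun n : ℕ => 1 / ((n:ℝ)+1)^2) := by
  have := (summable_nat_add_iff 1).mpr hasSum_zeta_two.summable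
  exact_mod_cast this

lemma aR_sum : HasSum aR (1/2 * Real.log (2*Real.pi) - eulerGamma/2 - 1/2) := by
  have hs : Summable aR := Summable.of_nonneg_of_le aR_nonneg aR_le inv_sq_summable
  have h1 := (tendsto_add_atTop_iff_nat 1).mpr hs.hasSum.tendsto_sum_nat
  have hst : Tendsto (fun n : ℕ => Real.log (Stirling.stirlingSeq (n+1))) atTop (𝓝 (Real.log (√Real.pi))) :=
    ((tendsto_add_atTop_iff_nat 1).mpr Stirling.tendsto_stirlingSeq_sqrt_pi).log (by positivity)
  have hna : Tendsto (fun n : ℕ => ((n:ℝ)+1+1/2) * aR n) atTop (𝓝 0) := by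
    refine squeeze_zero (fun n => mul_nonneg (by positivity) (aR_nonneg n)) (g := fun n : ℕ => 2 * (1/((n:ℝ)+1))) (fun n => ?_) ?_
    · calc _ ≤ (2 * ((n:ℝ)+1)) * (1/((n:ℝ)+1)^2) := by
            gcongr
            · exact aR_nonneg n
            · linarith [(Nat.cast_nonneg n : (0:ℝ) ≤ n)]
            · exact aR_le n
        _ = _ := by field_simp
    · simpa using inv_tendsto.const_mul 2
  have h2 := ((((hst.add_const (1/2 * Real.log 2)).sub_const (eulerGamma/2 + 1/2)).sub
    (inv_tendsto.const_mul (1/4))).add hna)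
  have e : ∑' n, aR n = Real.log √Real.pi + 1/2 * Real.log 2 - (eulerGamma/2+1/2) - 1/4 * 0 + 0 := by
    refine tendsto_nhds_unique h1 (h2.congr fun n => ?_)
    rw [hR_sum, Stirling.log_stirlingSeq_formula]
    have hH : hR (n+1) = Real.log ((n:ℝ)+1) + eulerGamma + 1/(2*((n:ℝ)+1)) - aR n := by
      unfold aR; ring
    rw [hH]
    push_cast
    rw [Real.log_mul (by norm_num) (by positivity), Real.log_div (by positivity) (Real.exp_ne_zero _), Real.log_exp]
    field_simp
    ring
  have e2 : ∑' n, aR n = 1/2 * Real.log (2*Real.pi) - eulerGamma/2 - 1/2 := by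
    rw [e, Real.log_sqrt Real.pi_pos.le, Real.log_mul (by norm_num) Real.pi_ne_zero]; ring
  rw [← e2]; exact hs.hasSum

noncomputable def bR (n : ℕ) : ℝ := (Real.log ((n:ℝ)+1) + eulerGamma - hR n) / ((n:ℝ)+1)

lemma bR_eq (n : ℕ) : bR n = (aR n + 1/(2*((n:ℝ)+1))) / ((n:ℝ)+1) := by
  unfold bR aR
  rw [hR_succ]
  field_simp
  ring

lemma bR_nonneg (n : ℕ) : 0 ≤ bR n := by
  rw [bR_eq]; have := aR_nonneg n; positivity

lemma bR_le (n : ℕ) : bR n ≤ 2 * (1 / ((n:ℝ)+1)^2) := by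
  rw [bR_eq]
  have h := aR_le n
  have h1 : 1 / ((n:ℝ)+1)^2 ≤ 1/((n:ℝ)+1) := by
    apply one_div_le_one_div_of_le (by positivity)
    nlinarith [(Nat.cast_nonneg n : (0:ℝ) ≤ n)]
  calc _ ≤ (1/((n:ℝ)+1) + 1/(2*((n:ℝ)+1))) / ((n:ℝ)+1) := by
        gcongr
        exact h.trans h1
    _ ≤ _ := by
        have : (0:ℝ) < (n:ℝ)+1 := by positivity
        rw [← sub_nonneg]
        have e : 2 * (1 / ((n:ℝ)+1)^2) - (1/((n:ℝ)+1) + 1/(2*((n:ℝ)+1))) / ((n:ℝ)+1) = 1 / (2*((n:ℝ)+1)^2) := by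
          field_simp
          ring
        rw [e]; positivity

lemma bR_psum (N : ℕ) : ∑ m ∈ Finset.range N, bR m =
    ∑ j ∈ Finset.Icc 1 N, Real.log j / j + eulerGamma * hR N
      - 1/2 * ((hR N)^2 - ∑ m ∈ Finset.range N, 1/((m:ℝ)+1)^2) := by
  induction N with
  | zero => simp [hR_zero]
  | succ n ih =>
    rw [Finset.sum_range_succ, ih, Finset.sum_Icc_succ_top (by omega), Finset.sum_range_succ, bR, hR_succ]
    push_cast
    field_simp
    ring

lemma bR_sum : HasSum bR (eulerGamma^2/2 + Real.pi^2/12 + gamma1) := by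
  have hs : Summable bR := Summable.of_nonneg_of_le bR_nonneg bR_le (inv_sq_summable.mul_left 2)
  have h1 := (tendsto_add_atTop_iff_nat 1).mpr hs.hasSum.tendsto_sum_nat
  have hg := (tendsto_add_atTop_iff_nat 1).mpr gamma1_tendsto
  have hz : HasSum (fun n : ℕ => 1/((n:ℝ)+1)^2) (Real.pi^2/6) := by
    have := (hasSum_nat_add_iff' 1).mpr hasSum_zeta_two
    simpa using this
  have hz' := (tendsto_add_atTop_iff_nat 1).mpr hz.tendsto_sum_nat
  have hd := hR_tendsto'
  have hlogN : Tendsto (fun n : ℕ => Real.log ((n:ℝ)+1) * (1/((n:ℝ)+1))) atTop (𝓝 0) := by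
    have h := Real.isLittleO_log_id_atTop.tendsto_div_nhds_zero
    have h' := h.comp (tendsto_atTop_add_const_right atTop (1:ℝ) tendsto_natCast_atTop_atTop)
    refine h'.congr fun n => ?_
    simp [div_eq_mul_inv]
  have hHN : Tendsto (fun n : ℕ => hR (n+1) * (1/((n:ℝ)+1))) atTop (𝓝 0) := by
    have := (hd.mul inv_tendsto).add hlogN
    simp only [mul_zero, add_zero] at this
    refine this.congr fun n => ?_
    ring
  have hHnn : ∀ n, 0 ≤ hR n := fun n => Finset.sum_nonneg fun k _ => by positivity
  have haH : Tendsto (fun n : ℕ => hR (n+1) * aR n) atTop (𝓝 0) := by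
    refine squeeze_zero (fun n => mul_nonneg (hHnn _) (aR_nonneg n)) (fun n => ?_) hHN
    gcongr
    · exact hHnn _
    · refine (aR_le n).trans ?_
      apply one_div_le_one_div_of_le (by positivity)
      nlinarith [(Nat.cast_nonneg n : (0:ℝ) ≤ n)]
  have h2 := ((hg.add (hz'.const_mul (1/2))).add ((hd.pow 2).const_mul (1/2))).add
    (haH.sub (hHN.const_mul (1/2)))
  have e : ∑' n, bR n = gamma1 + 1 / 2 * (Real.pi ^ 2 / 6) + 1 / 2 * eulerGamma ^ 2 + (0 - 1 / 2 * 0) := by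
    refine tendsto_nhds_unique h1 (h2.congr fun n => ?_)
    rw [bR_psum]
    have e1 : aR n = Real.log ((n:ℝ)+1) - hR (n+1) + eulerGamma + 1 / (2 * ((n:ℝ)+1)) := rfl
    rw [e1]
    push_cast
    field_simp
    ring
  have e2 : ∑' n, bR n = eulerGamma^2/2 + Real.pi^2/12 + gamma1 := by
    rw [e]; ring
  rw [← e2]; exact hs.hasSum

open Filter Topology MeasureTheory

lemma gs1 {q : ℂ} (hq : ‖q‖ < 1) : HasSum (fun m : ℕ => q^(m+1)) (q / (1 - q)) := by
  have := (hasSum_geometric_of_norm_lt_one hq).mul_left q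
  simpa [pow_succ', div_eq_mul_inv] using this

lemma gs2 {q : ℂ} (hq : ‖q‖ < 1) : HasSum (fun m : ℕ => q^(m+1) / ((m:ℂ)+1)) (-Complex.log (1 - q)) := by
  have := (hasSum_nat_add_iff' 1).mpr (Complex.hasSum_taylorSeries_neg_log hq)
  simpa using this

lemma hR_nonneg (n : ℕ) : 0 ≤ hR n := Finset.sum_nonneg fun k _ => by positivity

lemma hR_le (n : ℕ) : hR n ≤ n := by
  unfold hR
  calc _ ≤ ∑ k ∈ Finset.range n, (1:ℝ) := by
        refine Finset.sum_le_sum fun k _ => ?_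
        rw [div_le_one (by positivity)]
        linarith [(Nat.cast_nonneg k : (0:ℝ) ≤ k)]
    _ = n := by simp

lemma hR_gs_summable {q : ℂ} (hq : ‖q‖ < 1) : Summable (fun m : ℕ => (hR m : ℂ) * q^m) := by
  have h := summable_pow_mul_geometric_of_norm_lt_one (R := ℝ) 1 (r := ‖q‖) (by simpa using hq)
  refine Summable.of_norm_bounded h fun m => ?_
  rw [norm_mul, norm_pow, Complex.norm_real, Real.norm_of_nonneg (hR_nonneg m), pow_one]
  gcongr
  exact hR_le m

lemma one_sub_ne {q : ℂ} (hq : ‖q‖ < 1) : 1 - q ≠ 0 := by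
  intro h
  have : q = 1 := by linear_combination -h
  rw [this] at hq; simp at hq

lemma gs3 {q : ℂ} (hq : ‖q‖ < 1) :
    HasSum (fun m : ℕ => (hR (m+1) : ℂ) * q^(m+1)) (-Complex.log (1 - q) / (1 - q)) := by
  have hs := hR_gs_summable hq
  have hs1 := (summable_nat_add_iff 1).mpr hs
  have e0 := hs.tsum_eq_zero_add
  simp only [hR_zero, Complex.ofReal_zero, zero_mul, zero_add] at e0
  have h2 := hs.hasSum.mul_left q
  have h3 := hs1.hasSum.sub h2
  have h4 : HasSum (fun m : ℕ => q^(m+1) / ((m:ℂ)+1)) (∑' b : ℕ, (hR (b+1) : ℂ) * q^(b+1) - q * ∑' b : ℕ, (hR b : ℂ) * q^b) := by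
    have hf : (fun m : ℕ => q^(m+1) / ((m:ℂ)+1)) = fun b : ℕ => (hR (b+1) : ℂ) * q^(b+1) - q * ((hR b : ℂ) * q^b) := ?_
    · rw [hf]; exact h3
    funext m
    rw [hR_succ]
    push_cast
    ring
  have h5 := h4.unique (gs2 hq)
  rw [e0] at h5
  have h6 := one_sub_ne hq
  have h7 : ∑' b : ℕ, (hR (b+1) : ℂ) * q^(b+1) = -Complex.log (1 - q) / (1 - q) := by
    rw [eq_div_iff h6, ← h5]; ring
  rw [← h7]; exact hs1.hasSum

lemma antidiag (n : ℕ) : ∑ kl ∈ Finset.HasAntidiagonal.antidiagonal n, 1/(((kl.1:ℂ)+1) * ((kl.2:ℂ)+1)) =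
    2 * (hR (n+1) : ℂ) / ((n:ℂ)+2) := by
  have hn : (n:ℂ)+2 ≠ 0 := by exact_mod_cast (by omega : n+2 ≠ 0)
  have e : ∀ kl ∈ Finset.HasAntidiagonal.antidiagonal n, 1/(((kl.1:ℂ)+1) * ((kl.2:ℂ)+1)) =
      (1/((n:ℂ)+2)) * (1/((kl.1:ℂ)+1) + 1/((kl.2:ℂ)+1)) := by
    intro kl h
    have h := Finset.HasAntidiagonal.mem_antidiagonal.mp h
    have h1 : (kl.1:ℂ)+1 ≠ 0 := by exact_mod_cast (by omega : kl.1+1 ≠ 0)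
    have h2 : (kl.2:ℂ)+1 ≠ 0 := by exact_mod_cast (by omega : kl.2+1 ≠ 0)
    have h3 : (n:ℂ) = kl.1 + kl.2 := by rw [← h]; push_cast; rfl
    rw [h3] at hn ⊢
    field_simp
    ring
  rw [Finset.sum_congr rfl e, ← Finset.mul_sum, Finset.sum_add_distrib]
  have s1 : ∑ kl ∈ Finset.HasAntidiagonal.antidiagonal n, 1/((kl.1:ℂ)+1) = (hR (n+1) : ℂ) := by
    rw [Finset.Nat.sum_antidiagonal_eq_sum_range_succ_mk]
    unfold hR; push_cast; rfl
  have s2 : ∑ kl ∈ Finset.HasAntidiagonal.antidiagonal n, 1/((kl.2:ℂ)+1) = (hR (n+1) : ℂ) := by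
    rw [← s1, ← Finset.Nat.sum_antidiagonal_swap]
    rfl
  rw [s1, s2]; ring

lemma gs4 {q : ℂ} (hq : ‖q‖ < 1) :
    HasSum (fun m : ℕ => (hR m : ℂ) / ((m:ℂ)+1) * q^(m+1)) ((Complex.log (1 - q))^2 / 2) := by
  have hs : Summable (fun m : ℕ => (hR m : ℂ) / ((m:ℂ)+1) * q^(m+1)) := by
    have h := ((summable_nat_add_iff (G := ℝ) 1).mpr (summable_geometric_of_norm_lt_one (x := ‖q‖) (by simpa using hq)))
    refine Summable.of_norm_bounded h fun m => ?_
    rw [norm_mul, norm_pow, norm_div, Complex.norm_real, Real.norm_of_nonneg (hR_nonneg m)]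
    have : ‖(m:ℂ)+1‖ = (m:ℝ)+1 := by
      rw [← Complex.ofReal_natCast, ← Complex.ofReal_one, ← Complex.ofReal_add, Complex.norm_real,
        Real.norm_of_nonneg (by positivity)]
    rw [this]
    have h2 : hR m / ((m:ℝ)+1) ≤ 1 := by
      rw [div_le_one (by positivity)]; linarith [hR_le m]
    calc _ ≤ 1 * ‖q‖^(m+1) := by gcongr
      _ = _ := one_mul _
  have hn : Summable (fun m : ℕ => ‖q^(m+1) / ((m:ℂ)+1)‖) := (gs2 hq).summable.norm
  have h := tsum_mul_tsum_eq_tsum_sum_antidiagonal_of_summable_norm hn hn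
  rw [(gs2 hq).tsum_eq] at h
  have e : ∀ n : ℕ, ∑ kl ∈ Finset.HasAntidiagonal.antidiagonal n, q^(kl.1+1)/((kl.1:ℂ)+1) * (q^(kl.2+1)/((kl.2:ℂ)+1))
      = 2 * ((hR (n+1) : ℂ) / (((n+1 : ℕ):ℂ)+1) * q^(n+1+1)) := by
    intro n
    have e1 : ∀ kl ∈ Finset.HasAntidiagonal.antidiagonal n, q^(kl.1+1)/((kl.1:ℂ)+1) * (q^(kl.2+1)/((kl.2:ℂ)+1)) =
      q^(n+2) * (1/(((kl.1:ℂ)+1) * ((kl.2:ℂ)+1))) := by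
      intro kl h
      have h := Finset.HasAntidiagonal.mem_antidiagonal.mp h
      rw [← h, div_mul_div_comm, ← pow_add]
      ring
    rw [Finset.sum_congr rfl e1, ← Finset.mul_sum, antidiag]
    push_cast
    have : (n:ℂ)+1+1 = n + 2 := by ring
    rw [this]; ring
  simp only [e] at h
  rw [tsum_mul_left] at h
  have e0 := hs.tsum_eq_zero_add
  simp only [hR_zero, Complex.ofReal_zero, zero_div, zero_mul, zero_add] at e0
  rw [← e0] at h
  have : (Complex.log (1 - q))^2 / 2 = ∑' m : ℕ, (hR m : ℂ) / ((m:ℂ)+1) * q^(m+1) := by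
    linear_combination h / 2
  rw [this]; exact hs.hasSum

noncomputable def EF (y : ℂ) (q : ℂ) : ℂ := ∑' m : ℕ, (eulerGamma + Complex.log (((m:ℂ) + 1) * y))
  / (Complex.exp (((m:ℂ) + 1) * y) - 1) * q^(m+1)
noncomputable def AF (q : ℂ) : ℂ := ∑' m : ℕ, (aR m : ℂ) * q^(m+1)
noncomputable def BF (q : ℂ) : ℂ := ∑' m : ℕ, (bR m : ℂ) * q^(m+1)

lemma abel_lim (c : ℕ → ℂ) (hc : Summable (fun m => ‖c m‖)) (q : ℝ → ℂ) (hq : ∀ ε, 0 < ε → ‖q ε‖ ≤ 1)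
    (hq1 : Tendsto q (𝓝[>] 0) (𝓝 1)) :
    Tendsto (fun ε => ∑' m : ℕ, c m * (q ε)^(m+1)) (𝓝[>] 0) (𝓝 (∑' m, c m)) := by
  refine tendsto_tsum_of_dominated_convergence hc (fun m => ?_) ?_
  · have := (hq1.pow (m+1)).const_mul (c m)
    simpa using this
  · filter_upwards [self_mem_nhdsWithin] with ε hε
    intro m
    rw [norm_mul, norm_pow]
    exact mul_le_of_le_one_right (norm_nonneg _) (pow_le_one₀ (norm_nonneg _) (hq ε hε))

lemma aR_csum : Summable (fun m => ‖(aR m : ℂ)‖) ∧ ∑' m, (aR m : ℂ) =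
    1/2 * Complex.log (2 * (Real.pi:ℂ)) - eulerGamma/2 - 1/2 := by
  refine ⟨?_, ?_⟩
  · refine aR_sum.summable.congr fun m => ?_
    rw [Complex.norm_real, Real.norm_of_nonneg (aR_nonneg m)]
  · rw [← Complex.ofReal_tsum, aR_sum.tsum_eq]
    push_cast [Complex.ofReal_log (show (0:ℝ) ≤ 2 * Real.pi by positivity)]
    rfl

lemma bR_csum : Summable (fun m => ‖(bR m : ℂ)‖) ∧ ∑' m, (bR m : ℂ) =
    (eulerGamma:ℂ)^2/2 + (Real.pi:ℂ)^2/12 + gamma1 := by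
  refine ⟨?_, ?_⟩
  · refine bR_sum.summable.congr fun m => ?_
    rw [Complex.norm_real, Real.norm_of_nonneg (bR_nonneg m)]
  · rw [← Complex.ofReal_tsum, bR_sum.tsum_eq]
    push_cast
    rfl

lemma e_csum {y : ℂ} (hy : 0 < y.re) : Summable (fun m : ℕ => ‖(eulerGamma + Complex.log (((m:ℂ) + 1) * y))
  / (Complex.exp (((m:ℂ) + 1) * y) - 1)‖) := by
  obtain ⟨C, hC, hb⟩ := coef_bound y hy
  have h1 : 0 < 1 - Real.exp (-y.re) := by
    have : Real.exp (-y.re) < 1 := by rw [Real.exp_lt_one_iff]; linarith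
    linarith
  refine Summable.of_nonneg_of_le (fun m => norm_nonneg _) (fun m => ?_)
    ((pow_geom_summable 1 y.re hy).mul_left (C / (1 - Real.exp (-y.re))))
  rw [norm_div]
  set X := Real.exp (-(y.re * ((m:ℝ)+1))) with hX
  have hXp : 0 < X := Real.exp_pos _
  have h2 : (1 - Real.exp (-y.re)) / X ≤ ‖Complex.exp (((m:ℂ) + 1) * y) - 1‖ := by
    have h3 := norm_sub_norm_le (Complex.exp (((m:ℂ) + 1) * y)) 1
    rw [Complex.norm_exp, w_re, norm_one] at h3
    have h4 : Real.exp (((m:ℝ)+1) * y.re) = 1 / X := by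
      rw [hX, Real.exp_neg]; field_simp
    rw [h4] at h3
    refine le_trans ?_ h3
    have h5 : X ≤ Real.exp (-y.re) := by
      rw [hX]; apply Real.exp_le_exp.mpr
      nlinarith [(Nat.cast_nonneg m : (0:ℝ) ≤ m)]
    rw [sub_div]
    have : 1 ≤ Real.exp (-y.re) / X := by rwa [le_div_iff₀ hXp, one_mul]
    linarith
  calc _ ≤ (C * ((m:ℝ)+1)) / ((1 - Real.exp (-y.re)) / X) := by
        have : 0 < (1 - Real.exp (-y.re)) / X := by positivity
        gcongr
        exact hb m
    _ = _ := by field_simp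

lemma STot_eq {y : ℂ} (hy : 0 < y.re) (ε : ℝ) (hε : 0 < ε) (q : ℂ) (hq : q = Complex.exp (-(ε * y))) :
    STot y ε = y * EF y q + y/2 * (AF q + Complex.log y * (q/(1-q)) - Complex.log (1-q)/(1-q) + Complex.log (1-q)/2)
      - BF q + Complex.log y * Complex.log (1-q) - (Complex.log (1-q))^2/2 := by
  have hqn : ‖q‖ < 1 := by
    rw [hq, Complex.norm_exp, Real.exp_lt_one_iff]
    have : (-((ε:ℂ) * y)).re = -(ε * y.re) := by simp
    rw [this]; have := mul_pos hε hy; linarith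
  have bs : ∀ c : ℕ → ℂ, Summable (fun m => ‖c m‖) → HasSum (fun m => c m * q^(m+1)) (∑' m, c m * q^(m+1)) := by
    intro c hc
    refine (Summable.of_norm_bounded hc fun m => ?_).hasSum
    rw [norm_mul, norm_pow]
    exact mul_le_of_le_one_right (norm_nonneg _) (pow_le_one₀ (norm_nonneg _) hqn.le)
  have hE := bs _ (e_csum hy)
  have hA := bs _ aR_csum.1
  have hB := bs _ bR_csum.1
  have H := ((((hE.mul_left y).add ((((hA.add ((gs1 hqn).mul_left (Complex.log y))).add (gs3 hqn)).sub
    ((gs2 hqn).mul_left (1/2))).mul_left (y/2))).sub hB).sub ((gs2 hqn).mul_left (Complex.log y))).sub (gs4 hqn)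
  unfold STot
  refine Eq.trans (tsum_congr fun m => ?_) (H.tsum_eq.trans ?_)
  swap
  · unfold EF AF BF
    ring
  · have hqm : Complex.exp (-(ε * (((m:ℂ) + 1) * y))) = q^(m+1) := by
      rw [hq, ← Complex.exp_nat_mul]; congr 1; push_cast; ring
    have hne : (m:ℂ)+1 ≠ 0 := by exact_mod_cast (by omega : m+1 ≠ 0)
    have hy0 := y_ne hy
    have hex := exp_sub_ne (t := ((m:ℂ) + 1) * y) (by rw [w_re]; positivity)
    rw [hqm]
    unfold GFn
    have ha : (aR m : ℂ) = (Real.log ((m:ℝ)+1) : ℂ) - (hR m + 1/((m:ℂ)+1)) + eulerGamma + 1/(2*((m:ℂ)+1)) := by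
      unfold aR; rw [hR_succ]; push_cast; ring
    have hb : (bR m : ℂ) = ((Real.log ((m:ℝ)+1) : ℂ) + eulerGamma - hR m) / ((m:ℂ)+1) := by
      unfold bR; push_cast; ring
    rw [ha, hb, hR_succ, log_nat_mul hy]
    push_cast
    set lg := Complex.log ((m:ℂ)+1)
    set Ex := Complex.exp (((m:ℂ) + 1) * y) - 1
    field_simp
    ring

open Filter Topology MeasureTheory Asymptotics

noncomputable def pF (y : ℂ) (ε : ℝ) : ℂ := (1 - Complex.exp (-(ε * y))) / (ε * y)

lemma eps_lim : Tendsto (fun ε : ℝ => ε) (𝓝[>] 0) (𝓝 0) := tendsto_id.mono_left nhdsWithin_le_nhds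

lemma eps_log_lim : Tendsto (fun ε : ℝ => ε * Real.log ε) (𝓝[>] 0) (𝓝 0) := by
  have := Real.continuous_mul_log.tendsto 0
  simp at this
  exact this.mono_left nhdsWithin_le_nhds

lemma pF_bigO {y : ℂ} (hy : 0 < y.re) :
    (fun ε : ℝ => pF y ε - 1 + ε * y / 2) =O[𝓝[>] 0] (fun ε : ℝ => ε^2) := by
  have hy0 := y_ne hy
  have h1 : ∀ᶠ ε : ℝ in 𝓝[>] 0, ‖y‖ * ε < 1 := by
    have : Tendsto (fun ε : ℝ => ‖y‖ * ε) (𝓝[>] 0) (𝓝 (‖y‖ * 0)) := eps_lim.const_mul _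
    rw [mul_zero] at this
    exact this.eventually (gt_mem_nhds one_pos)
  refine IsBigO.of_bound (‖y‖^2) ?_
  filter_upwards [h1, self_mem_nhdsWithin] with ε h hε
  have hε : 0 < ε := hε
  have hεc : (ε:ℂ) ≠ 0 := by exact_mod_cast hε.ne'
  have hn : ‖-((ε:ℂ) * y)‖ = ε * ‖y‖ := by
    rw [norm_neg, norm_mul, Complex.norm_real, Real.norm_of_nonneg hε.le]
  have hb := Complex.exp_bound (x := -((ε:ℂ) * y)) (by rw [hn]; linarith) (n := 3) (by norm_num)
  rw [hn] at hb
  simp only [Finset.sum_range_succ, Finset.sum_range_zero] at hb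
  norm_num at hb
  have e : pF y ε - 1 + ε * y / 2 = -(Complex.exp (-(ε * y)) - (1 + -(ε * y) + (ε*y)^2/2)) / (ε * y) := by
    unfold pF
    field_simp
    ring
  rw [e, norm_div, norm_neg]
  have hn2 : ‖(ε:ℂ) * y‖ = ε * ‖y‖ := by rw [← hn, norm_neg]
  have hyp : 0 < ‖y‖ := norm_pos_iff.mpr hy0
  rw [hn2, div_le_iff₀ (by positivity), Real.norm_of_nonneg (by positivity)]
  refine le_trans (le_of_eq ?_) (hb.trans ?_)
  · congr 1
  · have : 0 ≤ (ε * ‖y‖)^3 := by positivity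
    have e2 : ‖y‖ ^ 2 * ε ^ 2 * (ε * ‖y‖) = (ε * ‖y‖)^3 := by ring
    rw [e2]
    linarith

lemma eps_isBigO : (fun ε : ℝ => ε^2) =O[𝓝[>] (0:ℝ)] (fun ε : ℝ => ε) := by
  have h : (fun ε : ℝ => ε) =O[𝓝[>] (0:ℝ)] (fun _ : ℝ => (1:ℝ)) := eps_lim.isBigO_one ℝ
  have := (isBigO_refl (fun ε : ℝ => ε) (𝓝[>] (0:ℝ))).mul h
  refine this.congr (fun ε => by ring) (fun ε => by ring)

lemma lin_isBigO (c : ℂ) : (fun ε : ℝ => (ε:ℂ) * c) =O[𝓝[>] (0:ℝ)] (fun ε : ℝ => ε) := by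
  refine IsBigO.of_bound ‖c‖ (Eventually.of_forall fun ε => ?_)
  rw [norm_mul, Complex.norm_real, mul_comm]

lemma uF_bigO {y : ℂ} (hy : 0 < y.re) :
    (fun ε : ℝ => pF y ε - 1) =O[𝓝[>] 0] (fun ε : ℝ => ε) := by
  have := ((pF_bigO hy).trans eps_isBigO).sub (lin_isBigO (y/2))
  refine this.congr_left fun ε => by ring

lemma uF_lim {y : ℂ} (hy : 0 < y.re) : Tendsto (fun ε : ℝ => pF y ε - 1) (𝓝[>] 0) (𝓝 0) :=
  (uF_bigO hy).trans_tendsto eps_lim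

lemma uF_small {y : ℂ} (hy : 0 < y.re) : ∀ᶠ ε : ℝ in 𝓝[>] 0, ‖pF y ε - 1‖ < 1/2 := by
  have := (uF_lim hy).norm
  rw [norm_zero] at this
  exact this.eventually (gt_mem_nhds (by norm_num))

lemma uF_sq {y : ℂ} (hy : 0 < y.re) :
    (fun ε : ℝ => (pF y ε - 1)^2) =O[𝓝[>] 0] (fun ε : ℝ => ε^2) := (uF_bigO hy).pow 2

lemma eta_bigO {y : ℂ} (hy : 0 < y.re) :
    (fun ε : ℝ => Complex.log (pF y ε) + ε * y / 2) =O[𝓝[>] 0] (fun ε : ℝ => ε^2) := by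
  have h1 : (fun ε : ℝ => Complex.log (pF y ε) - (pF y ε - 1)) =O[𝓝[>] 0] (fun ε : ℝ => (pF y ε - 1)^2) := by
    refine IsBigO.of_bound 1 ?_
    filter_upwards [uF_small hy] with ε h
    have hb := Complex.norm_log_one_add_sub_self_le (z := pF y ε - 1) (by linarith)
    rw [add_sub_cancel] at hb
    refine hb.trans ?_
    rw [norm_pow, one_mul]
    have : (1 - ‖pF y ε - 1‖)⁻¹ ≤ 2 := by
      rw [inv_le_comm₀ (by linarith) (by norm_num)]; linarith
    nlinarith [sq_nonneg ‖pF y ε - 1‖]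
  have := (h1.trans (uF_sq hy)).add (pF_bigO hy)
  refine this.congr_left fun ε => by ring

lemma P_bigO {y : ℂ} (hy : 0 < y.re) :
    (fun ε : ℝ => (pF y ε)⁻¹ - 1 - ε * y / 2) =O[𝓝[>] 0] (fun ε : ℝ => ε^2) := by
  have h1 : (fun ε : ℝ => (pF y ε)⁻¹ - 1 + (pF y ε - 1)) =O[𝓝[>] 0] (fun ε : ℝ => (pF y ε - 1)^2) := by
    refine IsBigO.of_bound 2 ?_
    filter_upwards [uF_small hy] with ε h
    have hp : 1/2 ≤ ‖pF y ε‖ := by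
      have := norm_sub_norm_le (1:ℂ) (pF y ε)
      rw [norm_one, norm_sub_rev] at this
      linarith
    have hp0 : pF y ε ≠ 0 := by
      intro h; rw [h, norm_zero] at hp; linarith
    have e : (pF y ε)⁻¹ - 1 + (pF y ε - 1) = (pF y ε - 1)^2 / pF y ε := by
      field_simp
      ring
    rw [e, norm_div, div_le_iff₀ (by linarith)]
    nlinarith [norm_nonneg ((pF y ε - 1)^2)]
  have := (h1.trans (uF_sq hy)).sub (pF_bigO hy)
  refine this.congr_left fun ε => by ring

lemma log_split {y : ℂ} (hy : 0 < y.re) : ∀ᶠ ε : ℝ in 𝓝[>] 0,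
    Complex.log (1 - Complex.exp (-(ε * y))) = Complex.log ε + Complex.log y + Complex.log (pF y ε) := by
  filter_upwards [uF_small hy, self_mem_nhdsWithin] with ε h hε
  have hε : 0 < ε := hε
  have hy0 := y_ne hy
  have hεc : (ε:ℂ) ≠ 0 := by exact_mod_cast hε.ne'
  have hre : 0 < (pF y ε).re := by
    have h1 := Complex.abs_re_le_norm (pF y ε - 1)
    rw [Complex.sub_re, Complex.one_re] at h1
    have := (abs_le.mp h1).1
    linarith
  have hp0 := y_ne hre
  have e : 1 - Complex.exp (-(ε * y)) = ε * (y * pF y ε) := by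
    unfold pF; field_simp
  have a1 := Complex.abs_arg_lt_pi_div_two_iff.mpr (Or.inl hy)
  have a2 := Complex.abs_arg_lt_pi_div_two_iff.mpr (Or.inl hre)
  have b1 := abs_lt.mp a1
  have b2 := abs_lt.mp a2
  rw [e, Complex.log_ofReal_mul hε (mul_ne_zero hy0 hp0), Complex.log_mul hy0 hp0 ⟨by linarith [b1.1, b2.1], by linarith [b1.2, b2.2]⟩,
    Complex.ofReal_log hε.le]
  ring

lemma R_lim {y : ℂ} (hy : 0 < y.re) :
    Tendsto (fun ε : ℝ => y/2 * (Complex.log y * (Complex.exp (-(ε * y))/(1-Complex.exp (-(ε * y))))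
      - Complex.log (1-Complex.exp (-(ε * y)))/(1-Complex.exp (-(ε * y))) + Complex.log (1-Complex.exp (-(ε * y)))/2)
      + Complex.log y * Complex.log (1-Complex.exp (-(ε * y))) - (Complex.log (1-Complex.exp (-(ε * y))))^2/2
      + (Complex.log ε)^2/2 + Complex.log ε / ε / 2) (𝓝[>] 0)
      (𝓝 (y/4 - y/4 * Complex.log y + (Complex.log y)^2/2)) := by
  have hy0 := y_ne hy
  -- divided-by-epsilon facts
  have hdiv : ∀ f : ℝ → ℂ, f =O[𝓝[>] 0] (fun ε : ℝ => ε^2) →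
      (fun ε : ℝ => f ε / ε) =O[𝓝[>] 0] (fun ε : ℝ => ε) := by
    intro f hf
    have h1 : (fun ε : ℝ => ((ε:ℂ))⁻¹) =O[𝓝[>] (0:ℝ)] (fun ε : ℝ => ε⁻¹) :=
      IsBigO.of_bound 1 (Eventually.of_forall fun ε => by
        rw [norm_inv, norm_inv, Complex.norm_real, one_mul])
    have h2 := hf.mul h1
    refine h2.congr' (Eventually.of_forall fun ε => by simp [div_eq_mul_inv]) ?_
    filter_upwards [self_mem_nhdsWithin] with ε hε
    have : (ε:ℝ) ≠ 0 := ne_of_gt hε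
    field_simp
  have hlog : ∀ f : ℝ → ℂ, f =O[𝓝[>] 0] (fun ε : ℝ => ε) →
      Tendsto (fun ε : ℝ => f ε * Complex.log ε) (𝓝[>] 0) (𝓝 0) := by
    intro f hf
    have h1 : (fun ε : ℝ => Complex.log (ε:ℂ)) =O[𝓝[>] (0:ℝ)] (fun ε : ℝ => Real.log ε) := by
      refine IsBigO.of_bound 1 ?_
      filter_upwards [self_mem_nhdsWithin] with ε hε
      have hε : 0 < ε := hε
      rw [← Complex.ofReal_log hε.le, Complex.norm_real, one_mul]
    exact (hf.mul h1).trans_tendsto eps_log_lim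
  have hη : (fun ε : ℝ => Complex.log (pF y ε)) =O[𝓝[>] 0] (fun ε : ℝ => ε) := by
    have := ((eta_bigO hy).trans eps_isBigO).sub (lin_isBigO (y/2))
    refine this.congr_left fun ε => by ring
  have t1 : Tendsto (fun ε : ℝ => Complex.log (pF y ε)) (𝓝[>] 0) (𝓝 0) := hη.trans_tendsto eps_lim
  have t2 := hlog _ hη
  have t3 := (hdiv _ (eta_bigO hy)).trans_tendsto eps_lim
  have t4 := hlog _ (hdiv _ (P_bigO hy))
  have t5 : Tendsto (fun ε : ℝ => (pF y ε)⁻¹) (𝓝[>] 0) (𝓝 1) := by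
    have h := (uF_lim hy).add_const 1
    simp only [sub_add_cancel, zero_add] at h
    simpa using h.inv₀ one_ne_zero
  have T := ((((((t4.const_mul (-(1/2))).sub (((t3.sub_const (y/2)).mul t5).const_mul (1/2))).add
    (t1.const_mul (y/4))).sub t2).sub ((t1.pow 2).const_mul (1/2))).add_const
      (-(y/4 * Complex.log y) + (Complex.log y)^2/2))
  have hlim : -(1/2) * 0 - 1/2 * ((0 - y/2) * 1) + y/4 * 0 - 0 - 1/2 * 0^2 + (-(y/4 * Complex.log y) + (Complex.log y)^2/2)
    = y/4 - y/4 * Complex.log y + (Complex.log y)^2/2 := by ring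
  rw [hlim] at T
  refine T.congr' ?_
  filter_upwards [log_split hy, uF_small hy, self_mem_nhdsWithin] with ε hs hsm hε
  have hε : 0 < ε := hε
  have hεc : (ε:ℂ) ≠ 0 := by exact_mod_cast hε.ne'
  have hp0 : pF y ε ≠ 0 := by
    intro h; rw [h] at hsm; norm_num at hsm
  have e : 1 - Complex.exp (-(ε * y)) = ε * (y * pF y ε) := by
    unfold pF; field_simp
  rw [hs]
  have e2 : Complex.exp (-(ε * y)) = 1 - ε * (y * pF y ε) := by rw [← e]; ring
  rw [e2]
  set η := Complex.log (pF y ε)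
  set p := pF y ε
  set Y := Complex.log y
  set l := Complex.log (ε:ℂ)
  have e3 : 1 - (1 - ε * (y * p)) = ε * (y * p) := by ring
  rw [e3]
  field_simp
  ring

theorem stmt1 (y : ℂ) (hy : 0 < y.re) :
    Summable (psiTerm y) ∧
    y * (∑' n : ℕ, ((eulerGamma : ℂ) + Complex.log (((n : ℂ) + 1) * y))
          / (Complex.exp (((n : ℂ) + 1) * y) - 1))
      - (1/4) * y * Complex.log y
      + y * ((1/4) * Complex.log (2 * (Real.pi : ℂ)) - (eulerGamma : ℂ) / 4)
      + (1/2) * (Complex.log y) ^ 2 - (eulerGamma : ℂ) ^ 2 / 2 - (Real.pi : ℂ) ^ 2 / 12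
      = ∑' n : ℕ, psiTerm y n := by
  refine ⟨psi_summable hy, ?_⟩
  have hq : ∀ ε : ℝ, 0 < ε → ‖Complex.exp (-((ε:ℂ) * y))‖ ≤ 1 := by
    intro ε hε
    rw [Complex.norm_exp, Real.exp_le_one_iff]
    have : (-((ε:ℂ) * y)).re = -(ε * y.re) := by simp
    rw [this]; have := mul_pos hε hy; linarith
  have hq1 : Tendsto (fun ε : ℝ => Complex.exp (-((ε:ℂ) * y))) (𝓝[>] 0) (𝓝 1) := by
    have hc : Continuous (fun ε : ℝ => Complex.exp (-((ε:ℂ) * y))) := by fun_prop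
    have := hc.tendsto 0
    simp at this
    exact this.mono_left nhdsWithin_le_nhds
  have hE := abel_lim _ (e_csum hy) _ hq hq1
  have hA := abel_lim _ aR_csum.1 _ hq hq1
  have hB := abel_lim _ bR_csum.1 _ hq hq1
  rw [aR_csum.2] at hA
  rw [bR_csum.2] at hB
  have T := (((hE.const_mul y).add (hA.const_mul (y/2))).sub hB).add (R_lim hy)
  have hU := tendsto_nhds_unique (STot_lim hy) (T.congr' ?_)
  · linear_combination -hU
  · filter_upwards [self_mem_nhdsWithin] with ε hε
    rw [STot_eq hy ε hε _ rfl]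
    unfold EF AF BF
    ring
end

section
/- Let y ∈ ℂ with Re(y) > 0 be fixed. Then there exists a constant C > 0 such that for all integers n ≥ 2, | ψ₁(2πin/y) + ψ₁(−2πin/y) − (1/2)(log²(2πin/y) + log²(−2πin/y)) + y/(4n) | ≤ C log(n)/n². In particular, the series Σ_{n=1}^∞ { ψ₁(2πin/y) + ψ₁(−2πin/y) − (1/2)(log²(2πin/y) + log²(−2πin/y)) + y/(4n) } converges absolutely. -/
open Filter Topology MeasureTheory

noncomputable def psiTermN (y : ℂ) (n : ℕ) : ℂ :=
  psi1 (2 * (Real.pi : ℂ) * Complex.I * (n : ℂ) / y)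
    + psi1 (-(2 * (Real.pi : ℂ) * Complex.I * (n : ℂ) / y))
    - (1/2) * ((Complex.log (2 * (Real.pi : ℂ) * Complex.I * (n : ℂ) / y)) ^ 2
      + (Complex.log (-(2 * (Real.pi : ℂ) * Complex.I * (n : ℂ) / y))) ^ 2)
    + y / (4 * (n : ℂ))

noncomputable def fL (z : ℂ) : ℂ := Complex.log z / z
noncomputable def FL (z : ℂ) : ℂ := Complex.log z ^ 2 / 2
noncomputable def gE (z : ℂ) : ℂ := FL (z + 1) - FL z - (fL z + fL (z + 1)) / 2
noncomputable def fL1 (z : ℂ) : ℂ := (1 - Complex.log z) / z ^ 2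
noncomputable def fL2 (z : ℂ) : ℂ := (2 * Complex.log z - 3) / z ^ 3

lemma hasDeriv_shift {f : ℂ → ℂ} {f' : ℂ} (z : ℂ) (t : ℝ) (h : HasDerivAt f f' (z + t)) :
    HasDerivAt (fun s : ℝ => f (z + s)) f' t := by
  have h1 : HasDerivAt (fun s : ℂ => f (z + s)) f' (t : ℂ) := by
    have := HasDerivAt.comp_const_add z (t : ℂ) h
    exact this
  exact h1.comp_ofReal

lemma FL_deriv {z : ℂ} (hz : z ∈ Complex.slitPlane) : HasDerivAt FL (fL z) z := by
  have := ((Complex.hasDerivAt_log hz).pow 2).div_const 2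
  refine this.congr_deriv ?_
  unfold fL
  have := Complex.slitPlane_ne_zero hz
  field_simp
  norm_num

lemma fL_deriv {z : ℂ} (hz : z ∈ Complex.slitPlane) : HasDerivAt fL (fL1 z) z := by
  have h0 := Complex.slitPlane_ne_zero hz
  have := (Complex.hasDerivAt_log hz).div (hasDerivAt_id z) h0
  refine this.congr_deriv ?_
  unfold fL1
  simp only [id]
  field_simp

lemma fL1_deriv {z : ℂ} (hz : z ∈ Complex.slitPlane) : HasDerivAt fL1 (fL2 z) z := by
  have h0 := Complex.slitPlane_ne_zero hz
  have := ((Complex.hasDerivAt_log hz).const_sub 1).div ((hasDerivAt_id z).pow 2) (pow_ne_zero 2 h0)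
  refine this.congr_deriv ?_
  unfold fL2
  simp only [id, Pi.pow_apply]
  field_simp
  ring

lemma trap (z : ℂ) (M : ℝ) (hs : ∀ t : ℝ, 0 ≤ t → z + t ∈ Complex.slitPlane)
    (hM : ∀ t : ℝ, 0 ≤ t → ‖fL2 (z + t)‖ ≤ M) : ‖gE z‖ ≤ M := by
  have hM0 : 0 ≤ M := (norm_nonneg _).trans (hM 0 le_rfl)
  let h : ℝ → ℂ := fun t => FL (z + t) - FL z - (t : ℂ) / 2 * (fL z + fL (z + t))
  let h1 : ℝ → ℂ := fun t => (fL (z + t) - fL z) / 2 - (t : ℂ) / 2 * fL1 (z + t)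
  let h2 : ℝ → ℂ := fun t => - (t : ℂ) / 2 * fL2 (z + t)
  have ht : ∀ t : ℝ, HasDerivAt (fun s : ℝ => (s : ℂ) / 2) (1 / 2) t := fun t =>
    (HasDerivAt.ofReal_comp (hasDerivAt_id t)).div_const 2 |>.congr_deriv (by simp)
  have hd : ∀ t : ℝ, 0 ≤ t → HasDerivAt h (h1 t) t := by
    intro t h0
    have a := hasDeriv_shift z t (FL_deriv (hs t h0))
    have b := hasDeriv_shift z t (fL_deriv (hs t h0))
    refine ((a.sub_const (FL z)).sub ((ht t).mul (b.const_add (fL z)))).congr_deriv ?_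
    simp only [h1]; ring
  have hd1 : ∀ t : ℝ, 0 ≤ t → HasDerivAt h1 (h2 t) t := by
    intro t h0
    have a := hasDeriv_shift z t (fL1_deriv (hs t h0))
    have b := hasDeriv_shift z t (fL_deriv (hs t h0))
    refine (((b.sub_const (fL z)).div_const 2).sub ((ht t).mul a)).congr_deriv ?_
    simp only [h2]; ring
  have hb2 : ∀ t : ℝ, t ∈ Set.Ico (0 : ℝ) 1 → ‖h2 t‖ ≤ M := by
    intro t ht
    simp only [h2, norm_mul, norm_div, norm_neg, Complex.norm_real, Real.norm_eq_abs,
      abs_of_nonneg ht.1, Complex.norm_ofNat]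
    have := hM t ht.1
    have h3 := norm_nonneg (fL2 (z + t))
    nlinarith [ht.1, ht.2]
  have hb1 : ∀ t : ℝ, t ∈ Set.Icc (0 : ℝ) 1 → ‖h1 t‖ ≤ M := by
    intro t ht
    have := norm_image_sub_le_of_norm_deriv_le_segment'
      (fun x hx => (hd1 x hx.1).hasDerivWithinAt) hb2 t ht
    have e : h1 0 = 0 := by simp [h1]
    rw [e, sub_zero, sub_zero] at this
    nlinarith [ht.1, ht.2]
  have := norm_image_sub_le_of_norm_deriv_le_segment'
      (fun x hx => (hd x hx.1).hasDerivWithinAt) (fun x hx => hb1 x ⟨hx.1, hx.2.le⟩) 1 (by simp)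
  have e : h 0 = 0 := by simp [h]
  have e1 : h 1 = gE z := by simp [h, gE]; ring
  rw [e, e1, sub_zero, sub_zero, mul_one] at this
  exact this

/-- Bound on the second derivative. -/
lemma fL2_bound (z : ℂ) (n A t : ℝ) (hn : 2 ≤ n) (hA : 1 ≤ A) (ht : 0 ≤ t)
    (h1 : (n + t) / A ≤ ‖z + t‖) (h2 : ‖z + t‖ ≤ A * (n + t)) :
    ‖fL2 (z + t)‖ ≤ (60 * A ^ 4) * (Real.log n / n) / (n + t) ^ 2 := by
  set u := z + t
  have hA0 : 0 < A := by linarith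
  have hnt : 0 < n + t := by linarith
  have hu : 0 < ‖u‖ := lt_of_lt_of_le (by positivity) h1
  have hln : 1 / 2 ≤ Real.log n := by
    have := Real.log_two_gt_d9
    have := Real.log_le_log (by norm_num) hn
    linarith
  have hlA : Real.log A ≤ A := Real.log_le_self hA0.le
  have hlA0 : 0 ≤ Real.log A := Real.log_nonneg hA
  have hlog : Real.log (n + t) ≤ Real.log n + t / n := by
    have e : n + t = n * (1 + t / n) := by field_simp
    have : 0 < 1 + t / n := by positivity
    rw [e, Real.log_mul (by linarith) this.ne']
    have := Real.log_le_sub_one_of_pos this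
    linarith
  have hlog0 : 0 ≤ Real.log (n + t) := Real.log_nonneg (by linarith)
  have hl : |Real.log ‖u‖| ≤ Real.log (n + t) + A := by
    have a1 := Real.log_le_log (by positivity) h1
    have a2 := Real.log_le_log hu h2
    rw [Real.log_div hnt.ne' hA0.ne'] at a1
    rw [Real.log_mul hA0.ne' hnt.ne'] at a2
    rw [abs_le]; constructor <;> linarith
  have hcl : ‖Complex.log u‖ ≤ Real.log (n + t) + A + 4 := by
    have := Complex.norm_le_abs_re_add_abs_im (Complex.log u)
    rw [Complex.log_re, Complex.log_im] at this
    have := Complex.abs_arg_le_pi u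
    have := Real.pi_le_four
    linarith
  have hnum : ‖2 * Complex.log u - 3‖ ≤ 60 * A * (Real.log n / n) * (n + t) := by
    have e1 : ‖2 * Complex.log u - 3‖ ≤ 2 * ‖Complex.log u‖ + 3 := by
      refine (norm_sub_le _ _).trans ?_
      simp
    have e2 : t / n ≤ 2 * Real.log n * (t / n) := by
      have : 0 ≤ t / n := by positivity
      nlinarith
    have e3 : 60 * A * (Real.log n / n) * (n + t) = 60 * A * Real.log n * (1 + t / n) := by
      field_simp
    rw [e3]
    have h3 : 0 ≤ t / n := by positivity
    have h4 : 1 * (1/2) ≤ A * Real.log n := mul_le_mul hA hln (by norm_num) (by linarith)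
    have h5 : Real.log n ≤ A * Real.log n := by nlinarith
    have h6 : A ≤ 2 * (A * Real.log n) := by nlinarith
    have h7 : Real.log n * (t / n) ≤ A * Real.log n * (t / n) := mul_le_mul_of_nonneg_right h5 h3
    nlinarith
  unfold fL2
  rw [norm_div, norm_pow]
  have hden : (n + t) ^ 3 / A ^ 3 ≤ ‖u‖ ^ 3 := by
    rw [← div_pow]; gcongr
  calc ‖2 * Complex.log u - 3‖ / ‖u‖ ^ 3 ≤ (60 * A * (Real.log n / n) * (n + t)) / ((n + t) ^ 3 / A ^ 3) := by
        gcongr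
        
    _ = _ := by field_simp

/-- Good parameters. -/
structure Good (z : ℂ) (n A : ℝ) : Prop where
  hn : 2 ≤ n
  hA : 1 ≤ A
  slit : ∀ t : ℝ, 0 ≤ t → z + t ∈ Complex.slitPlane
  lo : ∀ t : ℝ, 0 ≤ t → (n + t) / A ≤ ‖z + t‖
  hi : ∀ t : ℝ, 0 ≤ t → ‖z + t‖ ≤ A * (n + t)

lemma gE_bound {z : ℂ} {n A : ℝ} (h : Good z n A) (k : ℕ) :
    ‖gE (z + k)‖ ≤ (60 * A ^ 4) * (Real.log n / n) / (n + k) ^ 2 := by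
  have hn := h.hn
  have hl : 0 ≤ Real.log n := Real.log_nonneg (by linarith)
  apply trap
  · intro t ht
    have := h.slit (k + t) (by positivity)
    push_cast at this
    rwa [add_assoc]
  · intro t ht
    have h0 : 0 ≤ (k : ℝ) + t := by positivity
    have := fL2_bound z n A (k + t) h.hn h.hA h0 (h.lo _ h0) (h.hi _ h0)
    push_cast at this
    rw [add_assoc]
    refine this.trans ?_
    have : 0 < n + k := by positivity
    gcongr ?_ / ?_ ^ 2 <;> linarith

lemma sum_inv_sq (n : ℝ) (hn : 2 ≤ n) (N : ℕ) :
    ∑ k ∈ Finset.range N, 1 / (n + k) ^ 2 ≤ 2 / n := by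
  have : ∀ N : ℕ, ∑ k ∈ Finset.range N, 1 / (n + k) ^ 2 ≤ 1 / (n - 1) - 1 / (n + N - 1) := by
    intro N
    induction N with
    | zero => simp
    | succ N ih =>
      rw [Finset.sum_range_succ]
      have hN : (0 : ℝ) ≤ N := by positivity
      have h1 : 0 < n + N - 1 := by linarith
      have h2 : 0 < n + N := by linarith
      have : 1 / (n + N) ^ 2 ≤ 1 / (n + N - 1) - 1 / (n + N) := by
        rw [div_sub_div _ _ h1.ne' h2.ne', div_le_div_iff₀ (by positivity) (by positivity)]
        nlinarith
      have e : n + ((N + 1 : ℕ) : ℝ) - 1 = n + N := by push_cast; ring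
      rw [e]; linarith
  refine (this N).trans ?_
  have hN : (0 : ℝ) ≤ N := by positivity
  have h1 : 0 < 1 / (n + N - 1) := by
    apply one_div_pos.2; linarith
  have : 1 / (n - 1) ≤ 2 / n := by
    rw [div_le_div_iff₀ (by linarith) (by linarith)]; linarith
  linarith

lemma sum_gE_norm {z : ℂ} {n A : ℝ} (h : Good z n A) (N : ℕ) :
    ∑ k ∈ Finset.range N, ‖gE (z + k)‖ ≤ (120 * A ^ 4) * (Real.log n / n ^ 2) := by
  have hn := h.hn
  have hA := h.hA
  have hl : 0 ≤ Real.log n := Real.log_nonneg (by linarith)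
  calc _ ≤ ∑ k ∈ Finset.range N, (60 * A ^ 4) * (Real.log n / n) * (1 / (n + k) ^ 2) := by
        refine Finset.sum_le_sum fun k _ => (gE_bound h k).trans (le_of_eq ?_)
        ring
    _ = (60 * A ^ 4) * (Real.log n / n) * ∑ k ∈ Finset.range N, (1 / (n + k) ^ 2) := by
        rw [Finset.mul_sum]
    _ ≤ (60 * A ^ 4) * (Real.log n / n) * (2 / n) := by
        gcongr
        exact sum_inv_sq n hn N
    _ = _ := by field_simp; ring

lemma sum_fL (z : ℂ) (N : ℕ) :
    ∑ k ∈ Finset.range N, fL (z + k) = FL (z + N) - FL z - (fL (z + N) - fL z) / 2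
      - ∑ k ∈ Finset.range N, gE (z + k) := by
  induction N with
  | zero => simp
  | succ N ih =>
    rw [Finset.sum_range_succ, Finset.sum_range_succ, ih]
    simp only [gE]
    push_cast
    rw [add_assoc z]
    ring

lemma good_one : Good 1 2 2 := by
  have hh : ∀ t : ℝ, 0 ≤ t → ‖(1 : ℂ) + t‖ = 1 + t := by
    intro t ht
    have : (1 : ℂ) + t = ((1 + t : ℝ) : ℂ) := by push_cast; rfl
    rw [this, Complex.norm_of_nonneg (by linarith)]
  refine ⟨le_rfl, by norm_num, ?_, ?_, ?_⟩
  · intro t ht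
    left
    simp; linarith
  · intro t ht
    rw [hh t ht]; linarith
  · intro t ht
    rw [hh t ht]; linarith

lemma good_mul (w : ℂ) (hw : w.im ≠ 0) : ∃ A : ℝ, ∀ n : ℝ, 2 ≤ n → Good (n * w) n A := by
  have hi : 0 < |w.im| := abs_pos.2 hw
  have h0 := norm_nonneg w
  have h1 : 0 ≤ (1 + ‖w‖) / |w.im| := by positivity
  refine ⟨1 + ‖w‖ + (1 + ‖w‖) / |w.im|, fun n hn => ⟨hn, by linarith, ?_, ?_, ?_⟩⟩
  · intro t ht
    right
    simp
    exact ⟨by linarith, hw⟩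
  · intro t ht
    rw [div_le_iff₀ (by positivity)]
    have a1 : n * |w.im| ≤ ‖(n : ℂ) * w + t‖ := by
      have := Complex.abs_im_le_norm ((n : ℂ) * w + t)
      simpa [abs_mul, abs_of_nonneg (by linarith : 0 ≤ n)] using this
    have a2 : t ≤ ‖(n : ℂ) * w + t‖ + n * ‖w‖ := by
      have := norm_sub_le ((n : ℂ) * w + t) (n * w)
      rw [add_sub_cancel_left, norm_mul, Complex.norm_of_nonneg ht,
        Complex.norm_of_nonneg (by linarith)] at this
      exact this
    set U := ‖(n : ℂ) * w + t‖
    have a3 : n ≤ U / |w.im| := by rwa [le_div_iff₀ hi]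
    have a4 : n * (1 + ‖w‖) ≤ U / |w.im| * (1 + ‖w‖) := by gcongr
    have a5 : U / |w.im| * (1 + ‖w‖) = U * ((1 + ‖w‖) / |w.im|) := by ring
    have a6 : 0 ≤ U * ‖w‖ := by positivity
    nlinarith
  · intro t ht
    have := norm_add_le ((n : ℂ) * w) t
    rw [norm_mul, Complex.norm_of_nonneg ht, Complex.norm_of_nonneg (by linarith)] at this
    have : 0 ≤ (1 + ‖w‖) / |w.im| * (n + t) := by positivity
    nlinarith

lemma log_div_sq_summable : Summable (fun m : ℕ => Real.log ((m : ℝ) + 1) / ((m : ℝ) + 1) ^ 2) := by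
  have h : Summable (fun m : ℕ => 2 * (1 / ((m : ℝ)) ^ (3 / 2 : ℝ))) :=
    (Real.summable_one_div_nat_rpow.2 (by norm_num)).mul_left 2
  have h := (summable_nat_add_iff 1).2 h
  refine Summable.of_nonneg_of_le (fun m => ?_) (fun m => ?_) h
  · have : (0 : ℝ) ≤ m := by positivity
    have := Real.log_nonneg (by linarith : 1 ≤ (m : ℝ) + 1)
    positivity
  · push_cast
    set x := (m : ℝ) + 1
    have hx : 0 < x := by positivity
    have := Real.log_le_rpow_div hx.le (by norm_num : (0 : ℝ) < 1 / 2)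
    have e : x ^ 2 = x ^ (3 / 2 : ℝ) * x ^ (1 / 2 : ℝ) := by
      rw [← Real.rpow_add hx, ← Real.rpow_natCast]; norm_num
    have p1 : 0 < x ^ (3 / 2 : ℝ) := by positivity
    have p2 : 0 < x ^ (1 / 2 : ℝ) := by positivity
    rw [e, div_le_iff₀ (by positivity)]
    calc _ ≤ x ^ (1 / 2 : ℝ) / (1 / 2) := this
      _ = _ := by field_simp

/-- difference of logs -/
lemma log_shift (w : ℂ) (x : ℝ) (hx : 0 < x) (hw : 2 * ‖w‖ ≤ x) :
    ‖Complex.log (x + w) - Complex.log x‖ ≤ 2 * ‖w‖ / x := by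
  have hx0 : (x : ℂ) ≠ 0 := by exact_mod_cast hx.ne'
  have e : (x : ℂ) + w = x * (1 + w / x) := by field_simp
  have hn : ‖w / x‖ ≤ 1 / 2 := by
    rw [norm_div, Complex.norm_of_nonneg hx.le, div_le_iff₀ hx]; linarith
  have h1 : (1 + w / x) ≠ 0 := by
    intro h
    have : w / x = -1 := by linear_combination h
    rw [this] at hn; norm_num at hn
  rw [e, Complex.log_ofReal_mul hx h1, Complex.ofReal_log hx.le, add_sub_cancel_left]
  refine (Complex.norm_log_one_add_half_le_self hn).trans ?_
  rw [norm_div, Complex.norm_of_nonneg hx.le, mul_div_assoc]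
  gcongr; norm_num

lemma fL_diff (w : ℂ) (x : ℝ) (hx : 1 ≤ x) (hw : 2 * ‖w‖ ≤ x) :
    ‖fL (x + w) - fL x‖ ≤ 4 * ‖w‖ * (1 / x ^ 2 + Real.log x / x ^ 2) := by
  have hx0 : 0 < x := by linarith
  have hxc : (x : ℂ) ≠ 0 := by exact_mod_cast hx0.ne'
  have hl := Real.log_nonneg hx
  have hlo : x / 2 ≤ ‖(x : ℂ) + w‖ := by
    have := norm_sub_le ((x : ℂ) + w) w
    rw [add_sub_cancel_right, Complex.norm_of_nonneg hx0.le] at this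
    linarith
  have hne : (x : ℂ) + w ≠ 0 := norm_pos_iff.1 (lt_of_lt_of_le (by positivity) hlo)
  have e : fL (x + w) - fL x = (Complex.log (x + w) - Complex.log x) / (x + w)
      - Complex.log x * w / ((x + w) * x) := by
    unfold fL; field_simp; ring
  rw [e]
  refine (norm_sub_le _ _).trans ?_
  rw [norm_div, norm_div, norm_mul, norm_mul, ← Complex.ofReal_log hx0.le,
    Complex.norm_of_nonneg hx0.le, Complex.norm_of_nonneg hl, Complex.ofReal_log hx0.le]
  have h1 : ‖Complex.log (x + w) - Complex.log x‖ / ‖(x : ℂ) + w‖ ≤ (2 * ‖w‖ / x) / (x / 2) := by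
    have := log_shift w x hx0 hw
    gcongr
  have h2 : Real.log x * ‖w‖ / (‖(x : ℂ) + w‖ * x) ≤ Real.log x * ‖w‖ / (x / 2 * x) := by
    gcongr
  have e1 : (2 * ‖w‖ / x) / (x / 2) = 4 * ‖w‖ * (1 / x ^ 2) := by field_simp; ring
  have e2 : Real.log x * ‖w‖ / (x / 2 * x) = 2 * ‖w‖ * (Real.log x / x ^ 2) := by field_simp
  have : 0 ≤ ‖w‖ * (Real.log x / x ^ 2) := by positivity
  rw [e1] at h1; rw [e2] at h2
  linarith

lemma ev_large (w : ℂ) : ∀ᶠ m : ℕ in atTop, 2 * ‖w‖ ≤ (m : ℝ) + 1 := by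
  filter_upwards [eventually_ge_atTop (⌈2 * ‖w‖⌉₊)] with m hm
  have := Nat.ceil_le.1 hm
  linarith

lemma psi_summable_s2 (z : ℂ) : Summable (fun k : ℕ => fL ((k : ℂ) + 1 + z) - fL ((k : ℂ) + 1)) := by
  have hs : Summable (fun m : ℕ => 4 * ‖z‖ * (1 / ((m : ℝ) + 1) ^ 2
      + Real.log ((m : ℝ) + 1) / ((m : ℝ) + 1) ^ 2)) := by
    have h := (summable_nat_add_iff 1).2 (Real.summable_one_div_nat_pow.2 (by norm_num : 1 < 2))
    push_cast at h
    exact (h.add log_div_sq_summable).mul_left _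
  refine Summable.of_norm_bounded_eventually_nat hs ?_
  filter_upwards [ev_large z] with m hm
  have := fL_diff z ((m : ℝ) + 1) (by linarith [(Nat.cast_nonneg m : (0 : ℝ) ≤ m)]) hm
  push_cast at this
  exact this

lemma tendsto_log_div : Tendsto (fun m : ℕ => Real.log ((m : ℝ) + 1) / ((m : ℝ) + 1)) atTop (𝓝 0) := by
  have h : Tendsto (fun x : ℝ => Real.log x / x) atTop (𝓝 0) := by
    simpa using Real.isLittleO_log_id_atTop.tendsto_div_nhds_zero
  exact h.comp (tendsto_atTop_add_const_right _ _ tendsto_natCast_atTop_atTop)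

lemma fL_real (m : ℕ) : fL ((m : ℂ) + 1) = ((Real.log ((m : ℝ) + 1) / ((m : ℝ) + 1) : ℝ) : ℂ) := by
  unfold fL
  rw [Complex.ofReal_div, Complex.ofReal_log (by positivity)]
  push_cast; rfl

lemma tendsto_fL (z : ℂ) : Tendsto (fun m : ℕ => fL ((m : ℂ) + 1 + z)) atTop (𝓝 0) := by
  have h1 := (psi_summable_s2 z).tendsto_atTop_zero
  have h2 : Tendsto (fun m : ℕ => fL ((m : ℂ) + 1)) atTop (𝓝 0) := by
    have := (Complex.continuous_ofReal.tendsto 0).comp tendsto_log_div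
    simp only [Complex.ofReal_zero] at this
    refine this.congr fun m => ?_
    rw [fL_real]; rfl
  simpa using h1.add h2

lemma tendsto_FL (z : ℂ) :
    Tendsto (fun m : ℕ => FL ((m : ℂ) + 1 + z) - FL ((m : ℂ) + 1)) atTop (𝓝 0) := by
  have h0 : Tendsto (fun m : ℕ => 1 / ((m : ℝ) + 1)) atTop (𝓝 0) :=
    tendsto_one_div_add_atTop_nhds_zero_nat
  have hb : Tendsto (fun m : ℕ => (2 * ‖z‖ * (1 / ((m : ℝ) + 1))) ^ 2
      + (2 * ‖z‖) * (Real.log ((m : ℝ) + 1) / ((m : ℝ) + 1))) atTop (𝓝 0) := by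
    simpa using ((h0.const_mul (2 * ‖z‖)).pow 2).add (tendsto_log_div.const_mul (2 * ‖z‖))
  refine squeeze_zero_norm' ?_ hb
  filter_upwards [ev_large z] with m hm
  have hx : 0 < (m : ℝ) + 1 := by positivity
  have hx1 : 1 ≤ (m : ℝ) + 1 := by linarith [(Nat.cast_nonneg m : (0 : ℝ) ≤ m)]
  have := log_shift z ((m : ℝ) + 1) hx hm
  have hl := Real.log_nonneg hx1
  have hL : ‖Complex.log ((m : ℂ) + 1)‖ = Real.log ((m : ℝ) + 1) := by
    have : (m : ℂ) + 1 = (((m : ℝ) + 1 : ℝ) : ℂ) := by push_cast; rfl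
    rw [this, ← Complex.ofReal_log hx.le, Complex.norm_of_nonneg hl]
  push_cast at this
  set d := Complex.log ((m : ℂ) + 1 + z) - Complex.log ((m : ℂ) + 1) with hd
  have e : FL ((m : ℂ) + 1 + z) - FL ((m : ℂ) + 1)
      = d ^ 2 / 2 + d * Complex.log ((m : ℂ) + 1) := by
    unfold FL; rw [hd]; ring
  rw [e]
  refine (norm_add_le _ _).trans ?_
  rw [norm_mul, hL, norm_div, norm_pow, Complex.norm_ofNat]
  have e1 : 2 * ‖z‖ * (1 / ((m : ℝ) + 1)) = 2 * ‖z‖ / ((m : ℝ) + 1) := by ring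
  rw [e1]
  have a1 : ‖d‖ ^ 2 ≤ (2 * ‖z‖ / ((m : ℝ) + 1)) ^ 2 := by gcongr
  have a2 : ‖d‖ * Real.log ((m : ℝ) + 1) ≤ 2 * ‖z‖ / ((m : ℝ) + 1) * Real.log ((m : ℝ) + 1) := by
    gcongr
  have a3 : 2 * ‖z‖ / ((m : ℝ) + 1) * Real.log ((m : ℝ) + 1)
    = 2 * ‖z‖ * (Real.log ((m : ℝ) + 1) / ((m : ℝ) + 1)) := by ring
  have a4 := sq_nonneg ‖d‖
  linarith

lemma gE_summable {z : ℂ} {n A : ℝ} (h : Good z n A) : Summable (fun k : ℕ => gE (z + k)) :=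
  Summable.of_norm (summable_of_sum_range_le (fun _ => norm_nonneg _) (sum_gE_norm h))

/-- the sequence defining gamma1, in complex form -/
lemma gamma_seq (N : ℕ) :
    (((∑ j ∈ Finset.Icc 1 (N + 1), Real.log j / j - (Real.log ((N + 1 : ℕ) : ℝ)) ^ 2 / 2 : ℝ)) : ℂ)
      = fL ((N : ℂ) + 1) / 2 - ∑ k ∈ Finset.range N, gE (1 + k) := by
  have h := sum_fL 1 N
  have e : ∑ j ∈ Finset.Icc 1 (N + 1), Real.log j / j
      = ∑ k ∈ Finset.range (N + 1), Real.log ((k : ℝ) + 1) / ((k : ℝ) + 1) := by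
    have := Finset.sum_Ico_add' (fun k : ℕ => Real.log (k : ℝ) / (k : ℝ)) 0 (N + 1) 1
    rw [Finset.range_eq_Ico]
    push_cast at this
    rw [this]
    rfl
  have e2 : FL ((N : ℂ) + 1) = ((Real.log ((N + 1 : ℕ) : ℝ) ^ 2 / 2 : ℝ) : ℂ) := by
    unfold FL
    push_cast
    rw [Complex.ofReal_log (by positivity)]
    push_cast; rfl
  rw [Complex.ofReal_sub, e, ← e2, Complex.ofReal_sum]
  have e3 : ∀ k : ℕ, ((Real.log ((k : ℝ) + 1) / ((k : ℝ) + 1) : ℝ) : ℂ) = fL (1 + k) := by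
    intro k; rw [← fL_real, add_comm]
  simp only [e3]
  rw [Finset.sum_range_succ, h]
  have f1 : fL 1 = 0 := by simp [fL]
  have f2 : FL 1 = 0 := by simp [FL]
  rw [f1, f2, add_comm (1 : ℂ) N]
  ring

lemma gamma1_tendsto_s2 : (gamma1 : ℂ) = - ∑' k : ℕ, gE (1 + k) := by
  have hc : Tendsto (fun N : ℕ => fL ((N : ℂ) + 1) / 2 - ∑ k ∈ Finset.range N, gE (1 + k)) atTop
      (𝓝 (- ∑' k : ℕ, gE (1 + k))) := by
    have h1 := tendsto_fL 0
    simp only [add_zero] at h1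
    simpa using (h1.div_const 2).sub (gE_summable good_one).hasSum.tendsto_sum_nat
  have hr := (Complex.continuous_re.tendsto _).comp hc
  have hi : (- ∑' k : ℕ, gE (1 + k)).im = 0 := by
    have := (Complex.continuous_im.tendsto _).comp hc
    refine tendsto_nhds_unique this ?_
    refine tendsto_const_nhds.congr fun N => ?_
    simp only [Function.comp]
    rw [← gamma_seq, Complex.ofReal_im]
  have hr2 : Tendsto (fun n : ℕ => ∑ j ∈ Finset.Icc 1 n, Real.log j / j - (Real.log n) ^ 2 / 2)
      atTop (𝓝 (- ∑' k : ℕ, gE (1 + k)).re) := by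
    rw [← tendsto_add_atTop_iff_nat 1]
    refine hr.congr fun N => ?_
    simp only [Function.comp]
    rw [← gamma_seq, Complex.ofReal_re]
  have : gamma1 = (- ∑' k : ℕ, gE (1 + k)).re := hr2.limUnder_eq
  rw [this]
  apply Complex.ext
  · simp
  · rw [hi]; simp

lemma psi1_bound {z : ℂ} {n A : ℝ} (h : Good z n A) :
    ‖psi1 z - FL z + fL z / 2‖ ≤ (120 * A ^ 4) * (Real.log n / n ^ 2) := by
  have hg : Tendsto (fun N => ∑ k ∈ Finset.range N, gE (z + k)) atTop
      (𝓝 (psi1 z - FL z + fL z / 2)) := by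
    have t1 := (psi_summable_s2 z).hasSum.tendsto_sum_nat
    have t2 := (gE_summable good_one).hasSum.tendsto_sum_nat
    have t3 := tendsto_FL (z - 1)
    have t4 := tendsto_fL (z - 1)
    have t5 := tendsto_fL 0
    have ep : psi1 z = -(gamma1 : ℂ) - fL z
      - ∑' k : ℕ, (fL ((k : ℂ) + 1 + z) - fL ((k : ℂ) + 1)) := rfl
    rw [ep, gamma1_tendsto_s2]
    have T := ((((t2.sub t1).add t3).add (t4.div_const 2)).add (t5.div_const 2)).sub_const
      (FL z + fL z / 2)
    have el : (∑' k : ℕ, gE (1 + k) - ∑' k : ℕ, (fL ((k : ℂ) + 1 + z) - fL ((k : ℂ) + 1)) + 0 + 0 / 2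
        + 0 / 2 - (FL z + fL z / 2)) = - - ∑' k : ℕ, gE (1 + k) - fL z
        - ∑' k : ℕ, (fL ((k : ℂ) + 1 + z) - fL ((k : ℂ) + 1)) - FL z + fL z / 2 := by ring
    rw [el] at T
    refine T.congr fun N => ?_
    have s1 := sum_fL z N
    have s2 := sum_fL 1 N
    have s3 : ∑ k ∈ Finset.range N, fL ((k : ℂ) + 1 + z)
        = ∑ k ∈ Finset.range N, fL (z + k) + fL (z + N) - fL z := by
      have a := Finset.sum_range_succ (fun k : ℕ => fL (z + k)) N
      have b := Finset.sum_range_succ' (fun k : ℕ => fL (z + k)) N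
      rw [a] at b
      have c : ∑ k ∈ Finset.range N, fL ((k : ℂ) + 1 + z)
          = ∑ k ∈ Finset.range N, fL (z + ((k + 1 : ℕ) : ℂ)) := by
        refine Finset.sum_congr rfl fun k _ => ?_
        congr 1; push_cast; ring
      rw [c, b]; simp
    have s4 : ∑ k ∈ Finset.range N, fL ((k : ℂ) + 1) = ∑ k ∈ Finset.range N, fL (1 + k) :=
      Finset.sum_congr rfl fun k _ => by rw [add_comm]
    have f1 : fL 1 = 0 := by simp [fL]
    have f2 : FL 1 = 0 := by simp [FL]
    have g1 : (N : ℂ) + 1 + (z - 1) = z + N := by ring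
    have g2 : (1 : ℂ) + N = N + 1 := by ring
    rw [Finset.sum_sub_distrib, s3, s4, s1, s2, f1, f2, g1, g2, add_zero]
    ring
  refine le_of_tendsto hg.norm (Eventually.of_forall fun N => ?_)
  exact (norm_sum_le _ _).trans (sum_gE_norm h N)

lemma psiTermN_eq (y : ℂ) (hy : 0 < y.re) (n : ℕ) (hn : 1 ≤ n) (z : ℂ)
    (hz : z = 2 * (Real.pi : ℂ) * Complex.I * (n : ℂ) / y) (him : 0 < z.im) :
    psiTermN y n = (psi1 z - FL z + fL z / 2) + (psi1 (-z) - FL (-z) + fL (-z) / 2) := by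
  have hy0 : y ≠ 0 := by rintro rfl; simp at hy
  have hn0 : (n : ℂ) ≠ 0 := by exact_mod_cast (by omega : n ≠ 0)
  have hp : (Real.pi : ℂ) ≠ 0 := by exact_mod_cast Real.pi_ne_zero
  have hz0 : z ≠ 0 := by rintro rfl; simp at him
  have hl : Complex.log (-z) = Complex.log z - Real.pi * Complex.I := by
    unfold Complex.log
    rw [norm_neg, Complex.arg_neg_eq_arg_sub_pi_of_im_pos him]
    push_cast; ring
  have key : fL z / 2 + fL (-z) / 2 = y / (4 * n) := by
    unfold fL
    rw [hl]
    have : Complex.log z / z / 2 + (Complex.log z - Real.pi * Complex.I) / (-z) / 2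
      = Real.pi * Complex.I / (2 * z) := by field_simp; ring
    rw [this, hz]
    field_simp
    ring
  unfold psiTermN
  rw [← hz, ← key]
  unfold FL
  ring

theorem stmt2 (y : ℂ) (hy : 0 < y.re) :
    (∃ C > 0, ∀ n : ℕ, 2 ≤ n →
      ‖psiTermN y n‖ ≤ C * Real.log n / (n : ℝ) ^ 2) ∧
    Summable (fun n : ℕ => ‖psiTermN y (n + 1)‖) := by
  have hy0 : y ≠ 0 := by rintro rfl; simp at hy
  set w : ℂ := 2 * (Real.pi : ℂ) * Complex.I / y with hw
  have him : 0 < w.im := by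
    have e : w = ((2 * Real.pi / Complex.normSq y : ℝ) : ℂ) * (Complex.I * (starRingEnd ℂ) y) := by
      rw [hw, div_eq_mul_inv, Complex.inv_def]; push_cast; ring
    rw [e, Complex.im_ofReal_mul]
    have : 0 < Complex.normSq y := Complex.normSq_pos.2 hy0
    have h2 : (Complex.I * (starRingEnd ℂ) y).im = y.re := by simp
    rw [h2]
    have := Real.pi_pos
    positivity
  obtain ⟨A, hA⟩ := good_mul w him.ne'
  obtain ⟨B, hB⟩ := good_mul (-w) (by simpa using him.ne')
  have hA1 := (hA 2 le_rfl).hA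
  have main : ∀ n : ℕ, 2 ≤ n →
      ‖psiTermN y n‖ ≤ (120 * A ^ 4 + 120 * B ^ 4) * Real.log n / (n : ℝ) ^ 2 := by
    intro n hn
    have hn' : (2 : ℝ) ≤ n := by exact_mod_cast hn
    have hz : (n : ℂ) * w = 2 * (Real.pi : ℂ) * Complex.I * (n : ℂ) / y := by rw [hw]; ring
    have hzi : 0 < ((n : ℂ) * w).im := by
      have : ((n : ℂ) * w).im = n * w.im := by simp
      rw [this]; positivity
    rw [psiTermN_eq y hy n (by omega) _ hz hzi]
    refine (norm_add_le _ _).trans ?_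
    have a := psi1_bound (hA n hn')
    have b := psi1_bound (hB n hn')
    rw [mul_neg] at b
    simp only [Complex.ofReal_natCast] at a b
    calc _ ≤ _ := add_le_add a b
      _ = _ := by ring
  refine ⟨⟨_, by positivity, main⟩, ?_⟩
  rw [← summable_nat_add_iff 1]
  have hs := ((summable_nat_add_iff 1).2 log_div_sq_summable).mul_left (120 * A ^ 4 + 120 * B ^ 4)
  refine Summable.of_nonneg_of_le (fun _ => norm_nonneg _) (fun m => ?_) hs
  have := main (m + 1 + 1) (by omega)
  rw [mul_div_assoc] at this
  push_cast at this ⊢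
  exact this
end
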